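/- arXiv:2411.12995 — 5 statements merged into one kernel-verified Lean document; each statement's English description precedes it below -/
import Mathlib

section
/- Under the fast-timescale recursion setup with step sizes α_k > 0, ∑_k α_k = ∞, ∑_k α_k² < ∞, and the conditional moment bounds E[‖G1_k‖² | F_k] ≤ C₁, E[g_k(i) | F_k] ≥ ε, E[g_k(i)² | F_k] ≤ C₂ almost surely for all k and all coordinates i, the iterates D_k satisfy sup_k E[‖D_k‖²] < ∞. -/
open MeasureTheory Filter

/-!
Work one coordinate at a time, with `x_{k+1} = x_k + α_k (G_k - g_k x_k)`. As `x_k` is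
`ℱ_k`-measurable, conditioning on `ℱ_k` gives `E[g_k x_k²] ≥ ε E[x_k²]` and
`E[g_k² x_k²] ≤ C₂ E[x_k²]`. Expanding the square and absorbing the cross term `2 x_k G_k` by
Young's inequality with weight `ε`, half of the drift `-2 α_k ε E[x_k²]` survives:
`E[x_{k+1}²] ≤ (1 - α_k ε + 2 α_k² C₂) E[x_k²] + (α_k / ε + 2 α_k²) E[G_k²]`.
Once `α_k` is small, the right-hand side is at most a convex combination of `E[x_k²]` and a constant
not depending on `k`, so it cannot exceed the larger of the two.
-/

section Sequences

lemma bddAbove_range_of_eventually_le_convex_combination {v t : ℕ → ℝ} {B : ℝ}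
    (ht : ∀ᶠ k in atTop, t k ∈ Set.Icc 0 1)
    (hv : ∀ᶠ k in atTop, v (k + 1) ≤ (1 - t k) * v k + t k * B) :
    BddAbove (Set.range v) := by
  obtain ⟨K, hK⟩ := eventually_atTop.1 (ht.and hv)
  have hbound : ∀ k ≥ K, v k ≤ max (v K) B := by
    intro k hk
    induction k, hk using Nat.le_induction with
    | base => exact le_max_left _ _
    | succ k hk ih =>
      obtain ⟨⟨ht0, ht1⟩, hstep⟩ := hK k hk
      calc v (k + 1) ≤ (1 - t k) * v k + t k * B := hstep
        _ ≤ (1 - t k) * max (v K) B + t k * max (v K) B := by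
          have : 0 ≤ 1 - t k := sub_nonneg.2 ht1
          have : B ≤ max (v K) B := le_max_right _ _
          gcongr
        _ = max (v K) B := by ring
  exact (isBoundedUnder_of_eventually_le (eventually_atTop.2 ⟨K, hbound⟩)).bddAbove_range

lemma bddAbove_range_of_le_perturbed_contraction {v w a : ℕ → ℝ} {b c ε M : ℝ} (hε : 0 < ε)
    (ha : ∀ k, 0 ≤ a k) (ha_lim : Tendsto a atTop (nhds 0)) (hv_nonneg : ∀ k, 0 ≤ v k)
    (hw_nonneg : ∀ k, 0 ≤ w k) (hw : ∀ k, w k ≤ M) (hb : 0 ≤ b)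
    (hv : ∀ k, v (k + 1) ≤ (1 - a k * ε + a k ^ 2 * c) * v k + (a k * b + 2 * a k ^ 2) * w k) :
    BddAbove (Set.range v) := by
  have eventually_mul_lt : ∀ r s : ℝ, 0 < s → ∀ᶠ k in atTop, a k * r < s := fun r s hs =>
    (by simpa using ha_lim.mul_const r : Tendsto (fun k => a k * r) atTop (nhds 0))
      |>.eventually_lt_const hs
  refine bddAbove_range_of_eventually_le_convex_combination
    (t := fun k => a k * ε / 2) (B := 2 / ε * ((b + 2) * M)) ?_ ?_
  · filter_upwards [eventually_mul_lt ε 2 two_pos] with k hk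
    exact ⟨by have := ha k; positivity, by linarith⟩
  · filter_upwards [eventually_mul_lt 1 1 one_pos, eventually_mul_lt c (ε / 2) (by positivity)]
      with k ha_one ha_c
    have hak := ha k
    have hcontract : 1 - a k * ε + a k ^ 2 * c ≤ 1 - a k * ε / 2 := by nlinarith
    have hforce : a k * b + 2 * a k ^ 2 ≤ a k * (b + 2) := by nlinarith
    calc v (k + 1)
        ≤ (1 - a k * ε + a k ^ 2 * c) * v k + (a k * b + 2 * a k ^ 2) * w k := hv k
      _ ≤ (1 - a k * ε / 2) * v k + a k * (b + 2) * M := by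
        have := hv_nonneg k
        have := hw_nonneg k
        have := hw k
        gcongr
      _ = (1 - a k * ε / 2) * v k + a k * ε / 2 * (2 / ε * ((b + 2) * M)) := by
        field_simp

lemma tendsto_zero_of_summable_sq {a : ℕ → ℝ} (ha : Summable fun k => a k ^ 2) :
    Tendsto a atTop (nhds 0) := by
  have h := ha.tendsto_atTop_zero.sqrt
  simp only [Real.sqrt_sq_eq_abs, Real.sqrt_zero] at h
  exact (tendsto_zero_iff_abs_tendsto_zero a).2 h

end Sequences

section ConditionalExpectation

variable {Ω : Type*} {m m0 : MeasurableSpace Ω} {μ : Measure Ω} {f h : Ω → ℝ} {c : ℝ}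

lemma lintegral_condLExp_mul (hm : m ≤ m0) [SigmaFinite (μ.trim hm)] {X Y : Ω → ENNReal}
    (hX : AEMeasurable X μ) (hY : Measurable[m] Y) :
    ∫⁻ ω, condLExp m μ X ω * Y ω ∂μ = ∫⁻ ω, X ω * Y ω ∂μ := by
  have hYm0 : AEMeasurable Y μ := (hY.mono hm le_rfl).aemeasurable
  have trim_eq : (μ.withDensity (condLExp m μ X)).trim hm = (μ.withDensity X).trim hm := by
    refine @Measure.ext _ m _ _ fun s hs => ?_
    rw [trim_measurableSet_eq hm hs, trim_measurableSet_eq hm hs, withDensity_apply _ (hm s hs),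
      withDensity_apply _ (hm s hs), setLIntegral_condLExp hm μ X hs]
  calc ∫⁻ ω, condLExp m μ X ω * Y ω ∂μ
      = ∫⁻ ω, Y ω ∂(μ.withDensity (condLExp m μ X)) :=
        (lintegral_withDensity_eq_lintegral_mul₀
          (measurable_condLExp' m μ X).aemeasurable hYm0).symm
    _ = ∫⁻ ω, Y ω ∂(μ.withDensity X) := by
        rw [← lintegral_trim hm hY, trim_eq, lintegral_trim hm hY]
    _ = ∫⁻ ω, X ω * Y ω ∂μ := lintegral_withDensity_eq_lintegral_mul₀ hX hYm0

lemma integrable_mul_of_condExp_le (hm : m ≤ m0) [SigmaFinite (μ.trim hm)]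
    (hf : Integrable f μ) (hf_nonneg : 0 ≤ᵐ[μ] f) (hfc : ∀ᵐ ω ∂μ, (μ[f | m]) ω ≤ c)
    (hh_meas : StronglyMeasurable[m] h) (hh : Integrable h μ) :
    Integrable (f * h) μ := by
  refine ⟨hf.1.mul hh.1, ?_⟩
  calc ∫⁻ ω, ‖f ω * h ω‖ₑ ∂μ
      = ∫⁻ ω, ‖f ω‖ₑ * ‖h ω‖ₑ ∂μ := by simp only [enorm_mul]
    _ = ∫⁻ ω, condLExp m μ (fun ω => ‖f ω‖ₑ) ω * ‖h ω‖ₑ ∂μ :=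
      (lintegral_condLExp_mul hm hf.1.enorm hh_meas.enorm).symm
    _ ≤ ∫⁻ ω, ENNReal.ofReal c * ‖h ω‖ₑ ∂μ := by
      refine lintegral_mono_ae ?_
      filter_upwards [condLExp_enorm m hf hf_nonneg, condExp_nonneg (m := m) hf_nonneg, hfc]
        with ω h_enorm h_nonneg h_le
      rw [h_enorm, Real.enorm_eq_ofReal h_nonneg]
      gcongr
    _ = ENNReal.ofReal c * ∫⁻ ω, ‖h ω‖ₑ ∂μ :=
      lintegral_const_mul' _ _ ENNReal.ofReal_ne_top
    _ < ⊤ := ENNReal.mul_lt_top ENNReal.ofReal_lt_top hh.2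

lemma memLp_two_mul_of_condExp_sq_le (hm : m ≤ m0) [SigmaFinite (μ.trim hm)]
    (hf : MemLp f 2 μ) (hfc : ∀ᵐ ω ∂μ, (μ[fun ω => f ω ^ 2 | m]) ω ≤ c)
    (hh_meas : StronglyMeasurable[m] h) (hh : MemLp h 2 μ) :
    MemLp (f * h) 2 μ := by
  refine (memLp_two_iff_integrable_sq (hf.1.mul hh.1)).2 ?_
  simp only [Pi.mul_apply, mul_pow]
  exact integrable_mul_of_condExp_le hm hf.integrable_sq (ae_of_all _ fun _ => sq_nonneg _) hfc
    (hh_meas.pow 2) hh.integrable_sq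

lemma const_mul_integral_le_of_le_condExp (hm : m ≤ m0) [SigmaFinite (μ.trim hm)]
    (hf : Integrable f μ) (hcf : ∀ᵐ ω ∂μ, c ≤ (μ[f | m]) ω)
    (hh_meas : StronglyMeasurable[m] h) (hh : Integrable h μ) (hh_nonneg : 0 ≤ᵐ[μ] h)
    (hfh : Integrable (f * h) μ) :
    c * ∫ ω, h ω ∂μ ≤ ∫ ω, f ω * h ω ∂μ :=
  calc c * ∫ ω, h ω ∂μ = ∫ ω, c * h ω ∂μ := (integral_const_mul c h).symm
    _ ≤ ∫ ω, (μ[f * h | m]) ω ∂μ := by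
      refine integral_mono_ae (hh.const_mul c) integrable_condExp ?_
      filter_upwards [condExp_mul_of_stronglyMeasurable_right hh_meas hfh hf, hcf, hh_nonneg]
        with ω h_pull h_le h_nonneg
      rw [h_pull]
      exact mul_le_mul_of_nonneg_right h_le h_nonneg
    _ = ∫ ω, f ω * h ω ∂μ := integral_condExp hm

lemma integral_mul_le_of_condExp_le (hm : m ≤ m0) [SigmaFinite (μ.trim hm)]
    (hf : Integrable f μ) (hfc : ∀ᵐ ω ∂μ, (μ[f | m]) ω ≤ c)
    (hh_meas : StronglyMeasurable[m] h) (hh : Integrable h μ) (hh_nonneg : 0 ≤ᵐ[μ] h)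
    (hfh : Integrable (f * h) μ) :
    ∫ ω, f ω * h ω ∂μ ≤ c * ∫ ω, h ω ∂μ := by
  have hneg : ∀ᵐ ω ∂μ, -c ≤ (μ[-f | m]) ω := by
    filter_upwards [condExp_neg f m, hfc] with ω h_neg h_le
    rw [h_neg]
    exact neg_le_neg h_le
  have := const_mul_integral_le_of_le_condExp hm hf.neg hneg hh_meas hh hh_nonneg
    (by simpa only [neg_mul] using hfh.neg)
  simpa only [Pi.neg_apply, neg_mul, integral_neg, neg_le_neg_iff] using this

lemma integral_le_of_condExp_le (hm : m ≤ m0) [IsProbabilityMeasure μ]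
    (hfc : ∀ᵐ ω ∂μ, (μ[f | m]) ω ≤ c) :
    ∫ ω, f ω ∂μ ≤ c := by
  rw [← integral_condExp hm]
  simpa using integral_mono_ae integrable_condExp (integrable_const c) hfc

end ConditionalExpectation

section ScalarRecursion

lemma sq_relaxation_le {a ε : ℝ} (ha : 0 ≤ a) (hε : 0 < ε) (x G g : ℝ) :
    (x + a * (G - g * x)) ^ 2 ≤
      (1 + a * ε) * x ^ 2 - 2 * a * (g * x ^ 2) + 2 * a ^ 2 * (g ^ 2 * x ^ 2) +
        (a / ε + 2 * a ^ 2) * G ^ 2 := by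
  have young : 2 * (x * G) ≤ ε * x ^ 2 + G ^ 2 / ε := by
    have : ε * x ^ 2 + G ^ 2 / ε - 2 * (x * G) = (ε * x - G) ^ 2 / ε := by
      field_simp
      ring
    have : 0 ≤ (ε * x - G) ^ 2 / ε := by positivity
    linarith
  have parallelogram : (G - g * x) ^ 2 ≤ 2 * (g ^ 2 * x ^ 2) + 2 * G ^ 2 := by
    linarith [sq_nonneg (G + g * x)]
  calc (x + a * (G - g * x)) ^ 2
      = x ^ 2 - 2 * a * (g * x ^ 2) + a * (2 * (x * G)) + a ^ 2 * (G - g * x) ^ 2 := by ring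
    _ ≤ x ^ 2 - 2 * a * (g * x ^ 2) + a * (ε * x ^ 2 + G ^ 2 / ε) +
          a ^ 2 * (2 * (g ^ 2 * x ^ 2) + 2 * G ^ 2) := by gcongr
    _ = _ := by ring

variable {Ω : Type*} {m m0 : MeasurableSpace Ω} {μ : Measure Ω}

lemma integral_sq_relaxation_le_mixed_moments {x G g : Ω → ℝ} {a ε : ℝ} (ha : 0 ≤ a) (hε : 0 < ε)
    (hx : MemLp x 2 μ) (hG : MemLp G 2 μ) (hgx : MemLp (g * x) 2 μ) :
    ∫ ω, (x ω + a * (G ω - g ω * x ω)) ^ 2 ∂μ ≤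
      (1 + a * ε) * ∫ ω, x ω ^ 2 ∂μ - 2 * a * ∫ ω, g ω * x ω ^ 2 ∂μ +
        2 * a ^ 2 * ∫ ω, g ω ^ 2 * x ω ^ 2 ∂μ + (a / ε + 2 * a ^ 2) * ∫ ω, G ω ^ 2 ∂μ := by
  have hgxx : Integrable (fun ω => g ω * x ω ^ 2) μ := by
    simpa only [Pi.mul_def, mul_assoc, ← sq] using hgx.integrable_mul hx
  have hggxx : Integrable (fun ω => g ω ^ 2 * x ω ^ 2) μ := by
    simpa only [Pi.mul_apply, mul_pow] using hgx.integrable_sq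
  have hy : MemLp (fun ω => x ω + a * (G ω - g ω * x ω)) 2 μ :=
    hx.add ((hG.sub hgx).const_mul a)
  have hx_int := hx.integrable_sq.const_mul (1 + a * ε)
  have hgxx_int := hgxx.const_mul (2 * a)
  have hggxx_int := hggxx.const_mul (2 * a ^ 2)
  have hG_int := hG.integrable_sq.const_mul (a / ε + 2 * a ^ 2)
  calc ∫ ω, (x ω + a * (G ω - g ω * x ω)) ^ 2 ∂μ
      ≤ ∫ ω, ((1 + a * ε) * x ω ^ 2 - 2 * a * (g ω * x ω ^ 2) +
          2 * a ^ 2 * (g ω ^ 2 * x ω ^ 2) + (a / ε + 2 * a ^ 2) * G ω ^ 2) ∂μ :=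
        integral_mono hy.integrable_sq (((hx_int.sub hgxx_int).add hggxx_int).add hG_int)
          fun ω => sq_relaxation_le ha hε _ _ _
    _ = _ := by
        rw [integral_add (by fun_prop) hG_int, integral_add (by fun_prop) hggxx_int,
          integral_sub hx_int hgxx_int]
        simp only [integral_const_mul]

lemma integral_sq_relaxation_le [IsFiniteMeasure μ] {x G g : Ω → ℝ} {a C ε : ℝ}
    (hm : m ≤ m0) (ha : 0 ≤ a) (hε : 0 < ε)
    (hx_meas : StronglyMeasurable[m] x) (hx : MemLp x 2 μ) (hG : MemLp G 2 μ) (hg : MemLp g 2 μ)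
    (hg_mean : ∀ᵐ ω ∂μ, ε ≤ (μ[g | m]) ω)
    (hg_sq : ∀ᵐ ω ∂μ, (μ[fun ω => g ω ^ 2 | m]) ω ≤ C) :
    ∫ ω, (x ω + a * (G ω - g ω * x ω)) ^ 2 ∂μ ≤
      (1 - a * ε + a ^ 2 * (2 * C)) * ∫ ω, x ω ^ 2 ∂μ +
        (a / ε + 2 * a ^ 2) * ∫ ω, G ω ^ 2 ∂μ := by
  have hgx : MemLp (g * x) 2 μ := memLp_two_mul_of_condExp_sq_le hm hg hg_sq hx_meas hx
  have hx_sq_meas : StronglyMeasurable[m] fun ω => x ω ^ 2 := hx_meas.pow 2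
  have hx_sq_nonneg : 0 ≤ᵐ[μ] fun ω => x ω ^ 2 := ae_of_all _ fun _ => sq_nonneg _
  have drift : ε * ∫ ω, x ω ^ 2 ∂μ ≤ ∫ ω, g ω * x ω ^ 2 ∂μ :=
    const_mul_integral_le_of_le_condExp hm (hg.integrable one_le_two) hg_mean hx_sq_meas
      hx.integrable_sq hx_sq_nonneg
      (by simpa only [Pi.mul_def, mul_assoc, ← sq] using hgx.integrable_mul hx)
  have noise : ∫ ω, g ω ^ 2 * x ω ^ 2 ∂μ ≤ C * ∫ ω, x ω ^ 2 ∂μ :=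
    integral_mul_le_of_condExp_le hm hg.integrable_sq hg_sq hx_sq_meas hx.integrable_sq
      hx_sq_nonneg (by simpa only [Pi.mul_def, mul_pow] using hgx.integrable_sq)
  calc ∫ ω, (x ω + a * (G ω - g ω * x ω)) ^ 2 ∂μ
      ≤ (1 + a * ε) * ∫ ω, x ω ^ 2 ∂μ - 2 * a * ∫ ω, g ω * x ω ^ 2 ∂μ +
          2 * a ^ 2 * ∫ ω, g ω ^ 2 * x ω ^ 2 ∂μ + (a / ε + 2 * a ^ 2) * ∫ ω, G ω ^ 2 ∂μ :=
        integral_sq_relaxation_le_mixed_moments ha hε hx hG hgx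
    _ ≤ (1 + a * ε) * ∫ ω, x ω ^ 2 ∂μ - 2 * a * (ε * ∫ ω, x ω ^ 2 ∂μ) +
          2 * a ^ 2 * (C * ∫ ω, x ω ^ 2 ∂μ) + (a / ε + 2 * a ^ 2) * ∫ ω, G ω ^ 2 ∂μ := by
        gcongr
    _ = _ := by ring

variable {ℱ : Filtration ℕ m0} {x G g : ℕ → Ω → ℝ} {a : ℕ → ℝ} {C₁ C₂ ε : ℝ}

lemma memLp_two_of_relaxation_recursion [SigmaFiniteFiltration μ ℱ]
    (hx0 : MemLp (x 0) 2 μ) (hx_adapted : StronglyAdapted ℱ x)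
    (hrec : ∀ k ω, x (k + 1) ω = x k ω + a k * (G k ω - g k ω * x k ω))
    (hG : ∀ k, MemLp (G k) 2 μ) (hg : ∀ k, MemLp (g k) 2 μ)
    (hg_sq : ∀ k, ∀ᵐ ω ∂μ, (μ[fun ω => g k ω ^ 2 | ℱ k]) ω ≤ C₂) (k : ℕ) :
    MemLp (x k) 2 μ := by
  induction k with
  | zero => exact hx0
  | succ k hx =>
    rw [funext (hrec k)]
    have hgx : MemLp (g k * x k) 2 μ :=
      memLp_two_mul_of_condExp_sq_le (ℱ.le k) (hg k) (hg_sq k) (hx_adapted k) hx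
    exact hx.add (((hG k).sub hgx).const_mul (a k))

lemma bddAbove_integral_sq_of_relaxation_recursion [IsFiniteMeasure μ]
    (ha : ∀ k, 0 ≤ a k) (ha_lim : Tendsto a atTop (nhds 0)) (hε : 0 < ε)
    (hx : ∀ k, MemLp (x k) 2 μ) (hx_adapted : StronglyAdapted ℱ x)
    (hrec : ∀ k ω, x (k + 1) ω = x k ω + a k * (G k ω - g k ω * x k ω))
    (hG : ∀ k, MemLp (G k) 2 μ) (hG_sq : ∀ k, ∫ ω, G k ω ^ 2 ∂μ ≤ C₁)
    (hg : ∀ k, MemLp (g k) 2 μ) (hg_mean : ∀ k, ∀ᵐ ω ∂μ, ε ≤ (μ[g k | ℱ k]) ω)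
    (hg_sq : ∀ k, ∀ᵐ ω ∂μ, (μ[fun ω => g k ω ^ 2 | ℱ k]) ω ≤ C₂) :
    BddAbove (Set.range fun k => ∫ ω, x k ω ^ 2 ∂μ) := by
  have hstep : ∀ k, ∫ ω, x (k + 1) ω ^ 2 ∂μ ≤
      (1 - a k * ε + a k ^ 2 * (2 * C₂)) * ∫ ω, x k ω ^ 2 ∂μ +
        (a k * ε⁻¹ + 2 * a k ^ 2) * ∫ ω, G k ω ^ 2 ∂μ := fun k => by
    simpa only [hrec, div_eq_mul_inv] using integral_sq_relaxation_le (ℱ.le k) (ha k) hε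
      (hx_adapted k) (hx k) (hG k) (hg k) (hg_mean k) (hg_sq k)
  exact bddAbove_range_of_le_perturbed_contraction hε ha ha_lim
    (fun k => integral_nonneg fun _ => sq_nonneg _) (fun k => integral_nonneg fun _ => sq_nonneg _)
    hG_sq (inv_nonneg.2 hε.le) hstep

end ScalarRecursion

section EuclideanSpace

variable {Ω ι : Type*} [Fintype ι] {m0 : MeasurableSpace Ω} {μ : Measure Ω}

lemma integral_sq_coord_le_integral_sq_norm {X : Ω → EuclideanSpace ℝ ι} (hX : MemLp X 2 μ)
    (i : ι) : ∫ ω, X ω i ^ 2 ∂μ ≤ ∫ ω, ‖X ω‖ ^ 2 ∂μ := by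
  refine integral_mono (hX.eval_piLp i).integrable_sq hX.norm.integrable_sq fun ω => ?_
  simpa only [Real.norm_eq_abs, sq_abs] using
    pow_le_pow_left₀ (norm_nonneg _) (PiLp.norm_apply_le (X ω) i) 2

lemma lintegral_ofReal_sq_norm_eq_sum {X : Ω → EuclideanSpace ℝ ι} (hX : MemLp X 2 μ) :
    ∫⁻ ω, ENNReal.ofReal (‖X ω‖ ^ 2) ∂μ = ENNReal.ofReal (∑ i, ∫ ω, X ω i ^ 2 ∂μ) := by
  rw [← ofReal_integral_eq_lintegral_ofReal hX.norm.integrable_sq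
    (ae_of_all _ fun _ => sq_nonneg _)]
  simp only [EuclideanSpace.real_norm_sq_eq]
  rw [integral_finsetSum _ fun i _ => (hX.eval_piLp i).integrable_sq]

theorem fast_iterates_uniformly_L2_bounded_general [IsFiniteMeasure μ] {ℱ : Filtration ℕ m0}
    {α : ℕ → ℝ} (hα_nonneg : ∀ k, 0 ≤ α k) (hα_lim : Tendsto α atTop (nhds 0))
    {D G1 g : ℕ → Ω → EuclideanSpace ℝ ι} (hD0 : MemLp (D 0) 2 μ) (hD : StronglyAdapted ℱ D)
    (hrec : ∀ k, ∀ ω, ∀ i, D (k + 1) ω i = D k ω i + α k * (G1 k ω i - g k ω i * D k ω i))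
    {C₁ C₂ ε : ℝ} (hε : 0 < ε)
    (hG1 : ∀ k, MemLp (G1 k) 2 μ) (hG1_sq : ∀ k, ∫ ω, ‖G1 k ω‖ ^ 2 ∂μ ≤ C₁)
    (hg : ∀ k i, MemLp (fun ω => g k ω i) 2 μ)
    (hg_mean : ∀ k i, ∀ᵐ ω ∂μ, ε ≤ (μ[fun ω => g k ω i | ℱ k]) ω)
    (hg_sq : ∀ k i, ∀ᵐ ω ∂μ, (μ[fun ω => g k ω i ^ 2 | ℱ k]) ω ≤ C₂) :
    ∃ C : ℝ, ∀ k, ∫⁻ ω, ENNReal.ofReal (‖D k ω‖ ^ 2) ∂μ ≤ ENNReal.ofReal C := by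
  have hD_coord : ∀ i, StronglyAdapted ℱ fun k ω => D k ω i := fun i k =>
    (EuclideanSpace.proj (𝕜 := ℝ) i).continuous.comp_stronglyMeasurable (hD k)
  have hG1_coord : ∀ i k, MemLp (fun ω => G1 k ω i) 2 μ := fun i k => (hG1 k).eval_piLp i
  have hD_memLp : ∀ i k, MemLp (fun ω => D k ω i) 2 μ := fun i =>
    memLp_two_of_relaxation_recursion (hD0.eval_piLp i) (hD_coord i) (fun k ω => hrec k ω i)
      (hG1_coord i) (hg · i) (hg_sq · i)
  have hD_bdd : ∀ i, BddAbove (Set.range fun k => ∫ ω, D k ω i ^ 2 ∂μ) := fun i =>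
    bddAbove_integral_sq_of_relaxation_recursion hα_nonneg hα_lim hε (hD_memLp i) (hD_coord i)
      (fun k ω => hrec k ω i) (hG1_coord i)
      (fun k => (integral_sq_coord_le_integral_sq_norm (hG1 k) i).trans (hG1_sq k))
      (hg · i) (hg_mean · i) (hg_sq · i)
  choose C hC using hD_bdd
  refine ⟨∑ i, C i, fun k => ?_⟩
  rw [lintegral_ofReal_sq_norm_eq_sum (.of_eval_piLp (hD_memLp · k))]
  exact ENNReal.ofReal_le_ofReal (Finset.sum_le_sum fun i _ => hC i ⟨k, rfl⟩)

end EuclideanSpace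

/-- Lemma 1 of the paper: under the fast-timescale recursion
`D_{k+1}(i) = D_k(i) + α_k (G1_k(i) - g_k(i) D_k(i))` with square-summable (but
not summable) step sizes and the conditional moment bounds
`E[‖G1_k‖² | F_k] ≤ C₁`, `E[g_k(i) | F_k] ≥ ε`, `E[g_k(i)² | F_k] ≤ C₂`,
the second moments of the iterates are uniformly bounded:
`sup_k E[‖D_k‖²] < ∞`. -/
theorem fast_iterates_uniformly_L2_bounded
    {Ω : Type*} {m0 : MeasurableSpace Ω} (P : Measure Ω) [IsProbabilityMeasure P]
    (ℱ : Filtration ℕ m0) {n : ℕ}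
    (α : ℕ → ℝ) (hα_pos : ∀ k, 0 < α k)
    (hα_div : Tendsto (fun N => ∑ k ∈ Finset.range N, α k) atTop atTop)
    (hα_sq : Summable fun k => (α k) ^ 2)
    (D G1 g : ℕ → Ω → EuclideanSpace ℝ (Fin n))
    (d0 : EuclideanSpace ℝ (Fin n)) (hD0 : D 0 = fun _ => d0)
    (hG1meas : ∀ k, Measurable[ℱ (k + 1)] (G1 k))
    (hgmeas : ∀ k, Measurable[ℱ (k + 1)] (g k))
    (hDmeas : ∀ k, Measurable[ℱ k] (D k))
    (hrec : ∀ k, ∀ ω, ∀ i : Fin n,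
      D (k + 1) ω i = D k ω i + α k * (G1 k ω i - g k ω i * D k ω i))
    (C₁ C₂ ε : ℝ) (hC₁ : 0 < C₁) (hC₂ : 0 < C₂) (hε : 0 < ε)
    (hG1int : ∀ k, Integrable (fun ω => ‖G1 k ω‖ ^ 2) P)
    (hgint : ∀ k, ∀ i : Fin n, Integrable (fun ω => g k ω i) P)
    (hg2int : ∀ k, ∀ i : Fin n, Integrable (fun ω => (g k ω i) ^ 2) P)
    (hG1bound : ∀ k, ∀ᵐ ω ∂P, (P[(fun ω => ‖G1 k ω‖ ^ 2) | ℱ k]) ω ≤ C₁)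
    (hgmean : ∀ k, ∀ i : Fin n, ∀ᵐ ω ∂P, ε ≤ (P[(fun ω => g k ω i) | ℱ k]) ω)
    (hg2bound : ∀ k, ∀ i : Fin n, ∀ᵐ ω ∂P, (P[(fun ω => (g k ω i) ^ 2) | ℱ k]) ω ≤ C₂) :
    ∃ C : ℝ, ∀ k, ∫⁻ ω, ENNReal.ofReal (‖D k ω‖ ^ 2) ∂P ≤ ENNReal.ofReal C := by
  have hG1_aesm : ∀ k, AEStronglyMeasurable (G1 k) P := fun k =>
    ((hG1meas k).mono (ℱ.le _) le_rfl).aestronglyMeasurable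
  have hg_aesm : ∀ k i, AEStronglyMeasurable (fun ω => g k ω i) P := fun k i =>
    (EuclideanSpace.proj (𝕜 := ℝ) i).continuous.comp_aestronglyMeasurable
      ((hgmeas k).mono (ℱ.le _) le_rfl).aestronglyMeasurable
  exact fast_iterates_uniformly_L2_bounded_general (fun k => (hα_pos k).le)
    (tendsto_zero_of_summable_sq hα_sq) (hD0 ▸ memLp_const d0)
    (fun k => (hDmeas k).stronglyMeasurable) hrec hε
    (fun k => (memLp_two_iff_integrable_sq_norm (hG1_aesm k)).2 (hG1int k))
    (fun k => integral_le_of_condExp_le (ℱ.le k) (hG1bound k))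
    (fun k i => (memLp_two_iff_integrable_sq (hg_aesm k i)).2 (hg2int k i)) hgmean hg2bound
end

section
/- Under the fast-timescale recursion setup with step sizes α_k > 0, ∑_k α_k = ∞, ∑_k α_k² < ∞, and the conditional moment bounds E[‖G1_k‖² | F_k] ≤ C₁, E[g_k(i) | F_k] ≥ ε, E[g_k(i)² | F_k] ≤ C₂ almost surely for all k and all coordinates i, the iterates D_k are almost surely uniformly bounded: with probability one, sup_k ‖D_k‖ < ∞. -/
open MeasureTheory Filter

/-!
Far from the origin the linear term `-g_k D_k` dominates: by Young's inequality, the conditional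
mean of `⟪D_k, G1_k - g_k D_k⟫` is at most `(C₁ - ε² ‖D_k‖²) / (2 ε)`, which is nonpositive outside
the ball of radius `√C₁ / ε`. Let `V_k` be the squared distance from `D_k` to that ball. The
`α_k`-term of its conditional increment is nonpositive everywhere, and the `α_k²`-term is
controlled by the second moments, so that `E[V_{k+1} | F_k] ≤ (1 + O(α_k²)) V_k + O(α_k²)`. Since
`∑ α_k² < ∞`, the Robbins-Siegmund theorem makes `V_k` converge almost surely, and `D_k` is bounded.
With `‖D_k‖²` in place of `V_k` the argument breaks down, because the conditional drift may be
positive near the origin and `∑ α_k` diverges.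
-/

section CondExp

variable {Ω : Type*} {m m0 : MeasurableSpace Ω} {P : Measure Ω}

lemma condExp_add_le_add {u v a b : Ω → ℝ} (hu : Integrable u P) (hv : Integrable v P)
    (hu_le : P[u | m] ≤ᵐ[P] a) (hv_le : P[v | m] ≤ᵐ[P] b) : P[u + v | m] ≤ᵐ[P] a + b :=
  (condExp_add hu hv m).trans_le (hu_le.add_le_add hv_le)

lemma condExp_const_mul_le {u a : Ω → ℝ} {c : ℝ} (hc : 0 ≤ c) (hu_le : P[u | m] ≤ᵐ[P] a) :
    P[fun ω => c * u ω | m] ≤ᵐ[P] fun ω => c * a ω := by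
  filter_upwards [condExp_smul c u m, hu_le] with ω hsmul hω
  exact hsmul.trans_le (mul_le_mul_of_nonneg_left hω hc)

lemma withDensity_condLExp_trim (hm : m ≤ m0) [SigmaFinite (P.trim hm)] (f : Ω → ENNReal) :
    (P.trim hm).withDensity P⁻[f | m] = (P.withDensity f).trim hm := by
  refine @Measure.ext Ω m _ _ fun s hs => ?_
  rw [withDensity_apply _ hs, setLIntegral_condLExp_trim hm P f hs, trim_measurableSet_eq hm hs,
    withDensity_apply _ (hm s hs)]

lemma lintegral_condLExp_mul_s3 (hm : m ≤ m0) [SigmaFinite (P.trim hm)] {f w : Ω → ENNReal}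
    (hf : AEMeasurable f P) (hw : Measurable[m] w) :
    ∫⁻ ω, P⁻[f | m] ω * w ω ∂P = ∫⁻ ω, f ω * w ω ∂P := by
  have hcond : Measurable[m] P⁻[f | m] := measurable_condLExp m P f
  calc ∫⁻ ω, P⁻[f | m] ω * w ω ∂P
      = ∫⁻ ω, (P⁻[f | m] * w) ω ∂P.trim hm := (lintegral_trim hm (hcond.mul hw)).symm
    _ = ∫⁻ ω, w ω ∂(P.withDensity f).trim hm := by
        rw [← withDensity_condLExp_trim hm f, lintegral_withDensity_eq_lintegral_mul _ hcond hw]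
    _ = ∫⁻ ω, w ω ∂P.withDensity f := lintegral_trim hm hw
    _ = ∫⁻ ω, f ω * w ω ∂P :=
        lintegral_withDensity_eq_lintegral_mul₀ hf (hw.mono hm le_rfl).aemeasurable

lemma integrable_mul_of_condExp_le_s3 (hm : m ≤ m0) [SigmaFinite (P.trim hm)] {w z : Ω → ℝ} {C : ℝ}
    (hw : StronglyMeasurable[m] w) (hw_int : Integrable w P) (hz : Integrable z P)
    (hz_nonneg : 0 ≤ᵐ[P] z) (hz_le : P[z | m] ≤ᵐ[P] fun _ => C) :
    Integrable (fun ω => w ω * z ω) P := by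
  refine ⟨hw_int.1.mul hz.1, ?_⟩
  calc ∫⁻ ω, ‖w ω * z ω‖ₑ ∂P
      = ∫⁻ ω, ENNReal.ofReal (z ω) * ‖w ω‖ₑ ∂P := by
        refine lintegral_congr_ae ?_
        filter_upwards [hz_nonneg] with ω hω
        rw [enorm_mul, mul_comm, Real.enorm_of_nonneg hω]
    _ = ∫⁻ ω, P⁻[fun ω => ENNReal.ofReal (z ω) | m] ω * ‖w ω‖ₑ ∂P :=
        (lintegral_condLExp_mul_s3 hm hz.1.aemeasurable.ennreal_ofReal hw.enorm).symm
    _ ≤ ∫⁻ ω, ENNReal.ofReal C * ‖w ω‖ₑ ∂P := by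
        refine lintegral_mono_ae ?_
        filter_upwards [condLExp_ofReal m hz hz_nonneg, hz_le] with ω hω hC
        rw [hω]
        gcongr
    _ = ENNReal.ofReal C * ∫⁻ ω, ‖w ω‖ₑ ∂P := lintegral_const_mul' _ _ ENNReal.ofReal_ne_top
    _ < ⊤ := ENNReal.mul_lt_top ENNReal.ofReal_lt_top hw_int.2

lemma memLp_two_mul_of_condExp_sq_le_s3 (hm : m ≤ m0) [SigmaFinite (P.trim hm)] {w z : Ω → ℝ} {C : ℝ}
    (hw : StronglyMeasurable[m] w) (hw_mem : MemLp w 2 P) (hz : MemLp z 2 P)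
    (hz_le : P[fun ω => z ω ^ 2 | m] ≤ᵐ[P] fun _ => C) : MemLp (fun ω => w ω * z ω) 2 P := by
  refine (memLp_two_iff_integrable_sq (hw_mem.1.mul hz.1)).2 ?_
  simp only [Pi.mul_apply, mul_pow]
  exact integrable_mul_of_condExp_le_s3 hm (hw.pow 2) hw_mem.integrable_sq hz.integrable_sq
    (ae_of_all P fun ω => sq_nonneg (z ω)) hz_le

lemma condExp_sum_mul_le {ι : Type*} (s : Finset ι) {w z : ι → Ω → ℝ} {C : ℝ}
    (hw : ∀ i ∈ s, StronglyMeasurable[m] (w i)) (hw_nonneg : ∀ i ∈ s, 0 ≤ᵐ[P] w i)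
    (hz : ∀ i ∈ s, Integrable (z i) P) (hwz : ∀ i ∈ s, Integrable (w i * z i) P)
    (hz_le : ∀ i ∈ s, P[z i | m] ≤ᵐ[P] fun _ => C) :
    P[∑ i ∈ s, w i * z i | m] ≤ᵐ[P] fun ω => C * ∑ i ∈ s, w i ω := by
  have hterm : ∀ᵐ ω ∂P, ∀ i ∈ s, P[w i * z i | m] ω ≤ C * w i ω := by
    refine (Finset.eventually_all s).2 fun i hi => ?_
    filter_upwards [condExp_mul_of_stronglyMeasurable_left (hw i hi) (hwz i hi) (hz i hi),
      hw_nonneg i hi, hz_le i hi] with ω hmul hnonneg hle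
    rw [hmul, Pi.mul_apply, mul_comm]
    exact mul_le_mul_of_nonneg_right hle hnonneg
  filter_upwards [condExp_finsetSum hwz m, hterm] with ω hsum hω
  rw [hsum, Finset.sum_apply, Finset.mul_sum]
  exact Finset.sum_le_sum hω

end CondExp

section RobbinsSiegmund

variable {Ω : Type*} {m0 : MeasurableSpace Ω} {P : Measure Ω} [IsFiniteMeasure P]
  {ℱ : Filtration ℕ m0} {V : ℕ → Ω → ℝ} {b c : ℕ → ℝ}

lemma ae_exists_tendsto_of_nonneg_supermartingale (hV : Supermartingale V ℱ P)
    (hV_nonneg : ∀ k, 0 ≤ᵐ[P] V k) : ∀ᵐ ω ∂P, ∃ l, Tendsto (V · ω) atTop (nhds l) := by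
  have hbdd (k : ℕ) : eLpNorm ((-V) k) 1 P ≤ (∫ ω, V 0 ω ∂P).toNNReal := by
    have hle : ∫ ω, V k ω ∂P ≤ ∫ ω, V 0 ω ∂P := by
      simpa only [setIntegral_univ] using hV.setIntegral_le k.zero_le MeasurableSet.univ
    calc eLpNorm ((-V) k) 1 P
        = ENNReal.ofReal (∫ ω, ‖V k ω‖ ∂P) := by
          rw [Pi.neg_apply, eLpNorm_neg, eLpNorm_one_eq_lintegral_enorm,
            ofReal_integral_norm_eq_lintegral_enorm (hV.integrable k)]
      _ = ENNReal.ofReal (∫ ω, V k ω ∂P) := by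
          congr 1
          exact integral_congr_ae ((hV_nonneg k).mono fun ω hω => Real.norm_of_nonneg hω)
      _ ≤ ENNReal.ofReal (∫ ω, V 0 ω ∂P) := ENNReal.ofReal_le_ofReal hle
  filter_upwards [hV.neg.exists_ae_tendsto_of_bdd hbdd] with ω ⟨l, hl⟩
  exact ⟨-l, by simpa only [Pi.neg_apply, neg_neg] using hl.neg⟩

lemma ae_exists_tendsto_of_condExp_le_add (hV : StronglyAdapted ℱ V)
    (hV_int : ∀ k, Integrable (V k) P) (hV_nonneg : ∀ k, 0 ≤ᵐ[P] V k)
    (hc : Summable c) (hc_nonneg : ∀ k, 0 ≤ c k)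
    (hstep : ∀ k, P[V (k + 1) | ℱ k] ≤ᵐ[P] fun ω => V k ω + c k) :
    ∀ᵐ ω ∂P, ∃ l, Tendsto (V · ω) atTop (nhds l) := by
  let tail (k : ℕ) : ℝ := ∑' j, c (j + k)
  have htail_succ (k : ℕ) : tail k = c k + tail (k + 1) := by
    have := ((summable_nat_add_iff k).2 hc).tsum_eq_zero_add
    simpa only [tail, zero_add, add_assoc, add_comm 1 k] using this
  have hW : Supermartingale (fun k ω => V k ω + tail k) ℱ P := by
    refine supermartingale_nat (fun k => (hV k).add stronglyMeasurable_const)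
      (fun k => (hV_int k).add (integrable_const _)) fun k => ?_
    filter_upwards [condExp_add_le_add (hV_int (k + 1)) (integrable_const (tail (k + 1)))
      (hstep k) (EventuallyEq.of_eq (condExp_const (ℱ.le k) (tail (k + 1)))).le] with ω hω
    rwa [htail_succ k, ← add_assoc]
  have hW_nonneg (k : ℕ) : 0 ≤ᵐ[P] fun ω => V k ω + tail k :=
    (hV_nonneg k).mono fun ω hω => add_nonneg hω (tsum_nonneg fun j => hc_nonneg (j + k))
  filter_upwards [ae_exists_tendsto_of_nonneg_supermartingale hW hW_nonneg] with ω ⟨l, hl⟩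
  exact ⟨l - 0, by simpa only [tail, add_sub_cancel_right] using hl.sub (tendsto_sum_nat_add c)⟩

theorem ae_exists_tendsto_of_condExp_le_one_add_mul_add (hV : StronglyAdapted ℱ V)
    (hV_int : ∀ k, Integrable (V k) P) (hV_nonneg : ∀ k, 0 ≤ᵐ[P] V k)
    (hb : Summable b) (hb_nonneg : ∀ k, 0 ≤ b k) (hc : Summable c) (hc_nonneg : ∀ k, 0 ≤ c k)
    (hstep : ∀ k, P[V (k + 1) | ℱ k] ≤ᵐ[P] fun ω => (1 + b k) * V k ω + c k) :
    ∀ᵐ ω ∂P, ∃ l, Tendsto (V · ω) atTop (nhds l) := by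
  let S (k : ℕ) : ℝ := ∑ j ∈ Finset.range k, b j
  have hexp_le_one (k : ℕ) : Real.exp (-S k) ≤ 1 :=
    Real.exp_le_one_iff.2 (neg_nonpos.2 (Finset.sum_nonneg fun j _ => hb_nonneg j))
  have hexp_succ (k : ℕ) : Real.exp (-S (k + 1)) * (1 + b k) ≤ Real.exp (-S k) := by
    calc Real.exp (-S (k + 1)) * (1 + b k)
        ≤ Real.exp (-S (k + 1)) * Real.exp (b k) := by
          gcongr
          linarith [Real.add_one_le_exp (b k)]
      _ = Real.exp (-S k) := by
          rw [← Real.exp_add, show S (k + 1) = S k + b k from Finset.sum_range_succ b k]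
          ring_nf
  have hdiscounted : ∀ᵐ ω ∂P, ∃ l,
      Tendsto (fun k => Real.exp (-S k) * V k ω) atTop (nhds l) := by
    refine ae_exists_tendsto_of_condExp_le_add (fun k => (hV k).const_mul _)
      (fun k => (hV_int k).const_mul _)
      (fun k => (hV_nonneg k).mono fun ω hω => mul_nonneg (Real.exp_pos _).le hω)
      hc hc_nonneg fun k => ?_
    filter_upwards [condExp_const_mul_le (Real.exp_pos (-S (k + 1))).le (hstep k),
      hV_nonneg k] with ω hω hnonneg
    calc P[fun ω => Real.exp (-S (k + 1)) * V (k + 1) ω | ℱ k] ω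
        ≤ Real.exp (-S (k + 1)) * ((1 + b k) * V k ω + c k) := hω
      _ = Real.exp (-S (k + 1)) * (1 + b k) * V k ω + Real.exp (-S (k + 1)) * c k := by ring
      _ ≤ Real.exp (-S k) * V k ω + c k :=
          add_le_add (mul_le_mul_of_nonneg_right (hexp_succ k) hnonneg)
            (mul_le_of_le_one_left (hc_nonneg k) (hexp_le_one _))
  filter_upwards [hdiscounted] with ω ⟨l, hl⟩
  refine ⟨Real.exp (∑' j, b j) * l, ?_⟩
  refine (((Real.continuous_exp.tendsto _).comp hb.hasSum.tendsto_sum_nat).mul hl).congr fun k => ?_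
  rw [Function.comp_apply, ← mul_assoc, ← Real.exp_add, add_neg_cancel, Real.exp_zero, one_mul]

end RobbinsSiegmund

section NormExcess

variable {Ω : Type*} {m m0 : MeasurableSpace Ω} {P : Measure Ω}
variable {E : Type*} [NormedAddCommGroup E] {M : ℝ}

/-- The distance from `x` to the closed ball of radius `M ≥ 0` about the origin, written in closed
form. Its square serves as a Lyapunov function that ignores what a process does inside the ball. -/
def normExcess (M : ℝ) (x : E) : ℝ := max (‖x‖ - M) 0

lemma normExcess_nonneg (M : ℝ) (x : E) : 0 ≤ normExcess M x := le_max_right _ _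

lemma norm_sub_le_normExcess (M : ℝ) (x : E) : ‖x‖ - M ≤ normExcess M x := le_max_left _ _

lemma normExcess_le_norm (hM : 0 ≤ M) (x : E) : normExcess M x ≤ ‖x‖ :=
  max_le (sub_le_self _ hM) (norm_nonneg x)

lemma normExcess_eq_zero {x : E} (hx : ‖x‖ ≤ M) : normExcess M x = 0 :=
  max_eq_right (sub_nonpos.2 hx)

lemma normExcess_div_norm_nonneg (M : ℝ) (x : E) : 0 ≤ normExcess M x / ‖x‖ :=
  div_nonneg (normExcess_nonneg M x) (norm_nonneg x)

lemma normExcess_div_norm_le_one (hM : 0 ≤ M) (x : E) : normExcess M x / ‖x‖ ≤ 1 :=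
  div_le_one_of_le₀ (normExcess_le_norm hM x) (norm_nonneg x)

lemma continuous_normExcess (M : ℝ) : Continuous (normExcess M : E → ℝ) :=
  (continuous_norm.sub continuous_const).max continuous_const

lemma sq_norm_le_sq_normExcess (M : ℝ) (x : E) :
    ‖x‖ ^ 2 ≤ 2 * (normExcess M x ^ 2 + M ^ 2) :=
  calc ‖x‖ ^ 2 ≤ (normExcess M x + M) ^ 2 := by
        gcongr
        linarith [norm_sub_le_normExcess M x]
    _ ≤ 2 * (normExcess M x ^ 2 + M ^ 2) := add_sq_le

lemma memLp_normExcess (hM : 0 ≤ M) {p : ENNReal} {X : Ω → E} (hX : MemLp X p P) :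
    MemLp (fun ω => normExcess M (X ω)) p P :=
  hX.mono ((continuous_normExcess M).comp_aestronglyMeasurable hX.1) <| ae_of_all P fun ω => by
    rw [Real.norm_of_nonneg (normExcess_nonneg M _)]
    exact normExcess_le_norm hM _

lemma integrable_normExcess_div_norm_mul (hM : 0 ≤ M) {X : Ω → E} {f : Ω → ℝ}
    (hX : AEStronglyMeasurable X P) (hf : Integrable f P) :
    Integrable (fun ω => normExcess M (X ω) / ‖X ω‖ * f ω) P :=
  hf.bdd_mul (c := 1)
    (((continuous_normExcess M).comp_aestronglyMeasurable hX).div₀ hX.norm) <|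
    ae_of_all P fun ω => by
      rw [Real.norm_of_nonneg (normExcess_div_norm_nonneg M (X ω))]
      exact normExcess_div_norm_le_one hM (X ω)

lemma condExp_normExcess_div_norm_mul_nonpos (hm : m ≤ m0) (hM : 0 ≤ M) {X : Ω → E} {f : Ω → ℝ}
    (hX : StronglyMeasurable[m] X) (hf : Integrable f P)
    (hf_nonpos : ∀ᵐ ω ∂P, M ≤ ‖X ω‖ → P[f | m] ω ≤ 0) :
    P[fun ω => normExcess M (X ω) / ‖X ω‖ * f ω | m] ≤ᵐ[P] 0 := by
  have hratio : StronglyMeasurable[m] fun ω => normExcess M (X ω) / ‖X ω‖ :=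
    ((continuous_normExcess M).comp_stronglyMeasurable hX).div hX.norm
  filter_upwards [condExp_mul_of_stronglyMeasurable_left hratio
    (integrable_normExcess_div_norm_mul hM (hX.mono hm).aestronglyMeasurable hf) hf,
    hf_nonpos] with ω hmul hω
  refine hmul.trans_le ?_
  rcases le_total M ‖X ω‖ with hout | hin
  · exact mul_nonpos_of_nonneg_of_nonpos (normExcess_div_norm_nonneg M (X ω)) (hω hout)
  · simp only [Pi.mul_apply, normExcess_eq_zero hin, zero_div, zero_mul, Pi.zero_apply, le_refl]

variable [InnerProductSpace ℝ E]

-- Compare `x + y` with `x - q`, the projection of `x` to the ball: it lies in the ball, so the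
-- distance from `x + y` to the ball is at most `‖q + y‖`.
lemma sq_normExcess_add_le (hM : 0 ≤ M) (x y : E) :
    normExcess M (x + y) ^ 2 ≤
      normExcess M x ^ 2 + 2 * (normExcess M x / ‖x‖ * inner ℝ x y) + ‖y‖ ^ 2 := by
  set q : E := (normExcess M x / ‖x‖) • x with hq
  have hratio := Real.norm_of_nonneg (normExcess_div_norm_nonneg M x)
  have hq_norm : ‖q‖ = normExcess M x := by
    rw [hq, norm_smul, hratio]
    refine div_mul_cancel_of_imp fun hx => ?_
    exact le_antisymm (hx ▸ normExcess_le_norm hM x) (normExcess_nonneg M x)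
  have hproj : ‖x - q‖ ≤ M := by
    have hsub : ‖x - q‖ = ‖x‖ - ‖q‖ := by
      rw [show x - q = (1 - normExcess M x / ‖x‖) • x by rw [hq, sub_smul, one_smul], norm_smul,
        Real.norm_of_nonneg (sub_nonneg.2 (normExcess_div_norm_le_one hM x)), hq, norm_smul, hratio,
        sub_mul, one_mul]
    linarith [norm_sub_le_normExcess M x]
  have hdist : normExcess M (x + y) ≤ ‖q + y‖ := by
    refine max_le ?_ (norm_nonneg _)
    calc ‖x + y‖ - M = ‖(x - q) + (q + y)‖ - M := by rw [← add_assoc, sub_add_cancel]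
      _ ≤ ‖q + y‖ := by linarith [norm_add_le (x - q) (q + y)]
  calc normExcess M (x + y) ^ 2
      ≤ ‖q + y‖ ^ 2 := pow_le_pow_left₀ (normExcess_nonneg M _) hdist 2
    _ = normExcess M x ^ 2 + 2 * (normExcess M x / ‖x‖ * inner ℝ x y) + ‖y‖ ^ 2 := by
        rw [norm_add_sq_real, hq_norm, hq, real_inner_smul_left]

end NormExcess

section Drift

variable {Ω : Type*} {m m0 : MeasurableSpace Ω} {P : Measure Ω}
variable {E : Type*} [NormedAddCommGroup E] [InnerProductSpace ℝ E] {M : ℝ}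

lemma integrable_inner_of_memLp_two {X Y : Ω → E} (hX : MemLp X 2 P) (hY : MemLp Y 2 P) :
    Integrable (fun ω => inner ℝ (X ω) (Y ω)) P :=
  (hX.norm.integrable_mul hY.norm).mono' (hX.1.inner hY.1)
    (ae_of_all P fun ω => norm_inner_le_norm (X ω) (Y ω))

lemma condExp_sq_normExcess_add_le (hm : m ≤ m0) [SigmaFinite (P.trim hm)] (hM : 0 ≤ M)
    {X Y : Ω → E} (hX_meas : StronglyMeasurable[m] X) (hX : MemLp X 2 P) (hY : MemLp Y 2 P)
    (hdrift : ∀ᵐ ω ∂P, M ≤ ‖X ω‖ → P[fun ω => inner ℝ (X ω) (Y ω) | m] ω ≤ 0) :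
    P[fun ω => normExcess M (X ω + Y ω) ^ 2 | m] ≤ᵐ[P]
      fun ω => normExcess M (X ω) ^ 2 + P[fun ω => ‖Y ω‖ ^ 2 | m] ω := by
  let V (ω : Ω) : ℝ := normExcess M (X ω) ^ 2
  let Z (ω : Ω) : ℝ := normExcess M (X ω) / ‖X ω‖ * inner ℝ (X ω) (Y ω)
  have hXY : Integrable (fun ω => inner ℝ (X ω) (Y ω)) P := integrable_inner_of_memLp_two hX hY
  have hV : Integrable V P := (memLp_normExcess hM hX).integrable_sq
  have hZ : Integrable (fun ω => 2 * Z ω) P :=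
    (integrable_normExcess_div_norm_mul hM hX.1 hXY).const_mul 2
  have hY_sq : Integrable (fun ω => ‖Y ω‖ ^ 2) P := hY.norm.integrable_sq
  have hV_eq : P[V | m] = V := condExp_of_stronglyMeasurable hm
    (((continuous_normExcess M).comp_stronglyMeasurable hX_meas).pow 2) hV
  have hZ_le : P[fun ω => 2 * Z ω | m] ≤ᵐ[P] fun _ => 2 * 0 := condExp_const_mul_le zero_le_two
    (condExp_normExcess_div_norm_mul_nonpos hm hM hX_meas hXY hdrift)
  have hbound := condExp_add_le_add (hV.add hZ) hY_sq
    (condExp_add_le_add hV hZ (EventuallyEq.of_eq hV_eq).le hZ_le) (EventuallyLE.refl _ _)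
  filter_upwards [condExp_mono (m := m) (memLp_normExcess hM (hX.add hY)).integrable_sq
    ((hV.add hZ).add hY_sq) (ae_of_all P fun ω => sq_normExcess_add_le hM (X ω) (Y ω)),
    hbound] with ω hmono hω
  refine (hmono.trans hω).trans_eq ?_
  simp only [Pi.add_apply, mul_zero, add_zero, V]

lemma condExp_sq_normExcess_add_smul_le (hm : m ≤ m0) [SigmaFinite (P.trim hm)]
    (hM : 0 ≤ M) {X Y : Ω → E} {a C : ℝ} (hC : 0 ≤ C) (ha : 0 ≤ a)
    (hX_meas : StronglyMeasurable[m] X) (hX : MemLp X 2 P) (hY : MemLp Y 2 P)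
    (hdrift : ∀ᵐ ω ∂P, M ≤ ‖X ω‖ → P[fun ω => inner ℝ (X ω) (Y ω) | m] ω ≤ 0)
    (hY_le : P[fun ω => ‖Y ω‖ ^ 2 | m] ≤ᵐ[P] fun ω => C * (1 + ‖X ω‖ ^ 2)) :
    P[fun ω => normExcess M ((X + a • Y) ω) ^ 2 | m] ≤ᵐ[P] fun ω =>
      (1 + 2 * C * a ^ 2) * normExcess M (X ω) ^ 2 + C * (1 + 2 * M ^ 2) * a ^ 2 := by
  have hdrift_smul : ∀ᵐ ω ∂P, M ≤ ‖X ω‖ →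
      P[fun ω => inner ℝ (X ω) ((a • Y) ω) | m] ω ≤ 0 := by
    filter_upwards [condExp_smul a (fun ω => inner ℝ (X ω) (Y ω)) m, hdrift] with ω hsmul hω hout
    simp only [Pi.smul_apply, real_inner_smul_right]
    exact hsmul.trans_le (mul_nonpos_of_nonneg_of_nonpos ha (hω hout))
  filter_upwards [condExp_sq_normExcess_add_le hm hM hX_meas hX (hY.const_smul a) hdrift_smul,
    condExp_const_mul_le (sq_nonneg a) hY_le] with ω hω hY_sq
  simp only [Pi.smul_apply, norm_smul, mul_pow, Real.norm_eq_abs, sq_abs] at hω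
  calc P[fun ω => normExcess M ((X + a • Y) ω) ^ 2 | m] ω
      ≤ normExcess M (X ω) ^ 2 + a ^ 2 * (C * (1 + ‖X ω‖ ^ 2)) := hω.trans (by gcongr)
    _ ≤ normExcess M (X ω) ^ 2 +
          a ^ 2 * (C * (1 + 2 * (normExcess M (X ω) ^ 2 + M ^ 2))) := by
        gcongr
        exact sq_norm_le_sq_normExcess M _
    _ = _ := by ring

variable [IsFiniteMeasure P] {ℱ : Filtration ℕ m0}

theorem ae_bddAbove_norm_of_condExp_inner_nonpos {X Y : ℕ → Ω → E} {a : ℕ → ℝ} {C : ℝ}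
    (hM : 0 ≤ M) (hC : 0 ≤ C) (ha_nonneg : ∀ k, 0 ≤ a k) (ha : Summable fun k => a k ^ 2)
    (hX_adapted : StronglyAdapted ℱ X) (hX : ∀ k, MemLp (X k) 2 P) (hY : ∀ k, MemLp (Y k) 2 P)
    (hrec : ∀ k, X (k + 1) = X k + a k • Y k)
    (hdrift : ∀ k, ∀ᵐ ω ∂P, M ≤ ‖X k ω‖ → P[fun ω => inner ℝ (X k ω) (Y k ω) | ℱ k] ω ≤ 0)
    (hY_le : ∀ k, P[fun ω => ‖Y k ω‖ ^ 2 | ℱ k] ≤ᵐ[P] fun ω => C * (1 + ‖X k ω‖ ^ 2)) :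
    ∀ᵐ ω ∂P, BddAbove (Set.range fun k => ‖X k ω‖) := by
  have hconv := ae_exists_tendsto_of_condExp_le_one_add_mul_add
    (V := fun k ω => normExcess M (X k ω) ^ 2)
    (fun k => ((continuous_normExcess M).comp_stronglyMeasurable (hX_adapted k)).pow 2)
    (fun k => (memLp_normExcess hM (hX k)).integrable_sq)
    (fun k => ae_of_all P fun ω => sq_nonneg _)
    (ha.mul_left _) (fun k => by positivity) (ha.mul_left _) (fun k => by positivity)
    fun k => hrec k ▸ condExp_sq_normExcess_add_smul_le (ℱ.le k) hM hC (ha_nonneg k)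
      (hX_adapted k) (hX k) (hY k) (hdrift k) (hY_le k)
  filter_upwards [hconv] with ω ⟨l, hl⟩
  obtain ⟨B, hB⟩ := hl.bddAbove_range
  refine ⟨√(2 * (B + M ^ 2)), Set.forall_mem_range.2 fun k => Real.le_sqrt_of_sq_le ?_⟩
  exact (sq_norm_le_sq_normExcess M _).trans (by gcongr; exact hB ⟨k, rfl⟩)

end Drift

section LinearResidual

variable {Ω ι : Type*} {m m0 : MeasurableSpace Ω} {P : Measure Ω} [Fintype ι]

/-- The increment `G - diag(g) x` of the recursion, where `G` and `g` are the estimators of the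
density gradient and of the density at the iterate `x`. -/
def linearResidual (G g x : EuclideanSpace ℝ ι) : EuclideanSpace ℝ ι :=
  WithLp.toLp 2 fun i => G i - g i * x i

lemma sq_norm_linearResidual_le (G g x : EuclideanSpace ℝ ι) :
    ‖linearResidual G g x‖ ^ 2 ≤ 2 * (‖G‖ ^ 2 + ∑ i, x i ^ 2 * g i ^ 2) := by
  simp only [EuclideanSpace.real_norm_sq_eq, linearResidual, ← Finset.sum_add_distrib,
    Finset.mul_sum]
  gcongr with i
  nlinarith [sq_nonneg (G i + g i * x i)]

lemma inner_linearResidual_le {ε : ℝ} (hε : 0 < ε) (G g x : EuclideanSpace ℝ ι) :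
    inner ℝ x (linearResidual G g x) ≤
      (ε / 2) * ‖x‖ ^ 2 + (2 * ε)⁻¹ * ‖G‖ ^ 2 + ∑ i, x i ^ 2 * -g i := by
  have hyoung (s t : ℝ) : s * t ≤ (ε / 2) * s ^ 2 + (2 * ε)⁻¹ * t ^ 2 := by
    have : (ε / 2) * s ^ 2 + (2 * ε)⁻¹ * t ^ 2 - s * t = (2 * ε)⁻¹ * (ε * s - t) ^ 2 := by
      field_simp
      ring
    linarith [show 0 ≤ (2 * ε)⁻¹ * (ε * s - t) ^ 2 by positivity]
  simp only [EuclideanSpace.real_norm_sq_eq, PiLp.inner_apply, linearResidual, Finset.mul_sum,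
    ← Finset.sum_add_distrib]
  gcongr with i
  have := hyoung (x i) (G i)
  simp only [RCLike.inner_apply, conj_trivial]
  linarith

variable {X G g : Ω → EuclideanSpace ℝ ι} {C₁ C₂ ε : ℝ}

lemma memLp_coord_mul (hm : m ≤ m0) [SigmaFinite (P.trim hm)]
    (hX_meas : StronglyMeasurable[m] X) (hX : MemLp X 2 P) (hg : MemLp g 2 P)
    (hg_sq : ∀ i, P[fun ω => g ω i ^ 2 | m] ≤ᵐ[P] fun _ => C₂) (i : ι) :
    MemLp (fun ω => X ω i * g ω i) 2 P :=
  memLp_two_mul_of_condExp_sq_le_s3 hm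
    ((EuclideanSpace.proj i).continuous.comp_stronglyMeasurable hX_meas)
    (hX.eval_piLp i) (hg.eval_piLp i) (hg_sq i)

lemma memLp_linearResidual (hm : m ≤ m0) [SigmaFinite (P.trim hm)]
    (hX_meas : StronglyMeasurable[m] X) (hX : MemLp X 2 P)
    (hG : MemLp G 2 P) (hg : MemLp g 2 P)
    (hg_sq : ∀ i, P[fun ω => g ω i ^ 2 | m] ≤ᵐ[P] fun _ => C₂) :
    MemLp (fun ω => linearResidual (G ω) (g ω) (X ω)) 2 P :=
  .of_eval_piLp fun i => by
    simp only [linearResidual, mul_comm (g _ i)]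
    exact (hG.eval_piLp i).sub (memLp_coord_mul hm hX_meas hX hg hg_sq i)

lemma condExp_sq_norm_linearResidual_le (hm : m ≤ m0) [SigmaFinite (P.trim hm)]
    (hX_meas : StronglyMeasurable[m] X) (hX : MemLp X 2 P) (hG : MemLp G 2 P) (hg : MemLp g 2 P)
    (hG_sq : P[fun ω => ‖G ω‖ ^ 2 | m] ≤ᵐ[P] fun _ => C₁)
    (hg_sq : ∀ i, P[fun ω => g ω i ^ 2 | m] ≤ᵐ[P] fun _ => C₂) :
    P[fun ω => ‖linearResidual (G ω) (g ω) (X ω)‖ ^ 2 | m] ≤ᵐ[P]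
      fun ω => 2 * (C₁ + C₂ * ‖X ω‖ ^ 2) := by
  let w (i : ι) (ω : Ω) : ℝ := X ω i ^ 2
  let z (i : ι) (ω : Ω) : ℝ := g ω i ^ 2
  have hw (i : ι) : StronglyMeasurable[m] (w i) :=
    ((EuclideanSpace.proj i).continuous.comp_stronglyMeasurable hX_meas).pow 2
  have hwz (i : ι) : Integrable (w i * z i) P := by
    refine (memLp_coord_mul hm hX_meas hX hg hg_sq i).integrable_sq.congr (ae_of_all P fun ω => ?_)
    exact mul_pow _ _ _
  have hG_int : Integrable (fun ω => ‖G ω‖ ^ 2) P := hG.norm.integrable_sq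
  have hwz_sum : Integrable (∑ i, w i * z i) P := integrable_finsetSum' _ fun i _ => hwz i
  have hbound := condExp_const_mul_le zero_le_two <| condExp_add_le_add hG_int hwz_sum hG_sq <|
    condExp_sum_mul_le Finset.univ (fun i _ => hw i)
      (fun i _ => ae_of_all P fun ω => sq_nonneg (X ω i))
      (fun i _ => (hg.eval_piLp i).integrable_sq) (fun i _ => hwz i) (fun i _ => hg_sq i)
  refine (condExp_mono (memLp_linearResidual hm hX_meas hX hG hg hg_sq).norm.integrable_sq
    ((hG_int.add hwz_sum).const_mul 2) (ae_of_all P fun ω => ?_)).trans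
    (hbound.trans_eq (ae_of_all P fun ω => ?_))
  · simpa [w, z] using sq_norm_linearResidual_le (G ω) (g ω) (X ω)
  · simp only [Pi.add_apply, w, EuclideanSpace.real_norm_sq_eq]

lemma condExp_inner_linearResidual_le [IsFiniteMeasure P] (hm : m ≤ m0)
    (hX_meas : StronglyMeasurable[m] X) (hX : MemLp X 2 P) (hG : MemLp G 2 P) (hg : MemLp g 2 P)
    (hε : 0 < ε) (hG_sq : P[fun ω => ‖G ω‖ ^ 2 | m] ≤ᵐ[P] fun _ => C₁)
    (hg_mean : ∀ i, (fun _ => ε) ≤ᵐ[P] P[fun ω => g ω i | m])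
    (hg_sq : ∀ i, P[fun ω => g ω i ^ 2 | m] ≤ᵐ[P] fun _ => C₂) :
    P[fun ω => inner ℝ (X ω) (linearResidual (G ω) (g ω) (X ω)) | m] ≤ᵐ[P]
      fun ω => (2 * ε)⁻¹ * (C₁ - (ε * ‖X ω‖) ^ 2) := by
  let w (i : ι) (ω : Ω) : ℝ := X ω i ^ 2
  let z (i : ι) (ω : Ω) : ℝ := -g ω i
  let A (ω : Ω) : ℝ := ε / 2 * ‖X ω‖ ^ 2
  have hw (i : ι) : StronglyMeasurable[m] (w i) :=
    ((EuclideanSpace.proj i).continuous.comp_stronglyMeasurable hX_meas).pow 2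
  have hz (i : ι) : Integrable (z i) P := ((hg.eval_piLp i).integrable one_le_two).neg
  have hz_le (i : ι) : P[z i | m] ≤ᵐ[P] fun _ => -ε :=
    (condExp_neg (fun ω => g ω i) m).trans_le ((hg_mean i).mono fun ω hω => neg_le_neg hω)
  have hwz (i : ι) : Integrable (w i * z i) P := by
    refine ((hX.eval_piLp i).integrable_mul
      (memLp_coord_mul hm hX_meas hX hg hg_sq i)).neg.congr (ae_of_all P fun ω => ?_)
    simp only [Pi.neg_apply, Pi.mul_apply, w, z]
    ring
  have hA : Integrable A P := hX.norm.integrable_sq.const_mul _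
  have hA_eq : P[A | m] = A :=
    condExp_of_stronglyMeasurable hm ((hX_meas.norm.pow 2).const_mul _) hA
  have hG_int : Integrable (fun ω => (2 * ε)⁻¹ * ‖G ω‖ ^ 2) P := hG.norm.integrable_sq.const_mul _
  have hwz_sum : Integrable (∑ i, w i * z i) P := integrable_finsetSum' _ fun i _ => hwz i
  have hbound := condExp_add_le_add (hA.add hG_int) hwz_sum
    (condExp_add_le_add hA hG_int (EventuallyEq.of_eq hA_eq).le
      (condExp_const_mul_le (by positivity) hG_sq))
    (condExp_sum_mul_le Finset.univ (fun i _ => hw i)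
      (fun i _ => ae_of_all P fun ω => sq_nonneg (X ω i)) (fun i _ => hz i) (fun i _ => hwz i)
      (fun i _ => hz_le i))
  refine (condExp_mono (integrable_inner_of_memLp_two hX
      (memLp_linearResidual hm hX_meas hX hG hg hg_sq))
    ((hA.add hG_int).add hwz_sum) (ae_of_all P fun ω => ?_)).trans
    (hbound.trans_eq (ae_of_all P fun ω => ?_))
  · simpa [w, z, A] using inner_linearResidual_le hε (G ω) (g ω) (X ω)
  · simp only [Pi.add_apply, w, A, ← EuclideanSpace.real_norm_sq_eq]
    field_simp
    ring

end LinearResidual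

theorem fast_iterates_uniformly_bounded_as_general {Ω ι : Type*} [Fintype ι]
    {m0 : MeasurableSpace Ω} (P : Measure Ω) [IsFiniteMeasure P] (ℱ : Filtration ℕ m0)
    (α : ℕ → ℝ) (hα_nonneg : ∀ k, 0 ≤ α k) (hα_sq : Summable fun k => α k ^ 2)
    (D G1 g : ℕ → Ω → EuclideanSpace ℝ ι) (hD_adapted : StronglyAdapted ℱ D)
    (hD0 : MemLp (D 0) 2 P) (hG1 : ∀ k, MemLp (G1 k) 2 P) (hg : ∀ k, MemLp (g k) 2 P)
    (hrec : ∀ k ω i, D (k + 1) ω i = D k ω i + α k * (G1 k ω i - g k ω i * D k ω i))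
    (C₁ C₂ ε : ℝ) (hε : 0 < ε)
    (hG1_sq : ∀ k, ∀ᵐ ω ∂P, P[fun ω => ‖G1 k ω‖ ^ 2 | ℱ k] ω ≤ C₁)
    (hg_mean : ∀ k i, ∀ᵐ ω ∂P, ε ≤ P[fun ω => g k ω i | ℱ k] ω)
    (hg_sq : ∀ k i, ∀ᵐ ω ∂P, P[fun ω => g k ω i ^ 2 | ℱ k] ω ≤ C₂) :
    ∀ᵐ ω ∂P, BddAbove (Set.range fun k => ‖D k ω‖) := by
  let Y (k : ℕ) (ω : Ω) : EuclideanSpace ℝ ι := linearResidual (G1 k ω) (g k ω) (D k ω)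
  have hstep (k : ℕ) : D (k + 1) = D k + α k • Y k := by
    ext ω i
    exact hrec k ω i
  have hY_of_hD (k : ℕ) (hD : MemLp (D k) 2 P) : MemLp (Y k) 2 P :=
    memLp_linearResidual (ℱ.le k) (hD_adapted k) hD (hG1 k) (hg k) (hg_sq k)
  have hD (k : ℕ) : MemLp (D k) 2 P := by
    induction k with
    | zero => exact hD0
    | succ k ih => exact hstep k ▸ ih.add ((hY_of_hD k ih).const_smul (α k))
  refine ae_bddAbove_norm_of_condExp_inner_nonpos (M := √C₁ / ε) (C := 2 * (|C₁| + |C₂|))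
    (by positivity) (by positivity) hα_nonneg hα_sq hD_adapted hD (fun k => hY_of_hD k (hD k))
    hstep (fun k => ?_) fun k => ?_
  · filter_upwards [condExp_inner_linearResidual_le (ℱ.le k) (hD_adapted k) (hD k) (hG1 k) (hg k)
      hε (hG1_sq k) (hg_mean k) (hg_sq k)] with ω hω hout
    have hC₁ : C₁ ≤ (ε * ‖D k ω‖) ^ 2 :=
      (Real.sqrt_le_left (by positivity)).1 ((div_le_iff₀' hε).1 hout)
    exact hω.trans (mul_nonpos_of_nonneg_of_nonpos (by positivity) (sub_nonpos.2 hC₁))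
  · filter_upwards [condExp_sq_norm_linearResidual_le (ℱ.le k) (hD_adapted k) (hD k) (hG1 k) (hg k)
      (hG1_sq k) (hg_sq k)] with ω hω
    refine hω.trans ?_
    nlinarith [le_abs_self C₁, le_abs_self C₂, abs_nonneg C₁, abs_nonneg C₂, sq_nonneg ‖D k ω‖]

/-- Lemma 2 of the paper: under the fast-timescale recursion
`D_{k+1}(i) = D_k(i) + α_k (G1_k(i) - g_k(i) D_k(i))` with square-summable (but
not summable) step sizes and the conditional moment bounds
`E[‖G1_k‖² | F_k] ≤ C₁`, `E[g_k(i) | F_k] ≥ ε`, `E[g_k(i)² | F_k] ≤ C₂`,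
the iterates are almost surely uniformly bounded:
with probability one, `sup_k ‖D_k‖ < ∞`. -/
theorem fast_iterates_uniformly_bounded_as
    {Ω : Type*} {m0 : MeasurableSpace Ω} (P : Measure Ω) [IsProbabilityMeasure P]
    (ℱ : Filtration ℕ m0) {n : ℕ}
    (α : ℕ → ℝ) (hα_pos : ∀ k, 0 < α k)
    (hα_div : Tendsto (fun N => ∑ k ∈ Finset.range N, α k) atTop atTop)
    (hα_sq : Summable fun k => (α k) ^ 2)
    (D G1 g : ℕ → Ω → EuclideanSpace ℝ (Fin n))
    (d0 : EuclideanSpace ℝ (Fin n)) (hD0 : D 0 = fun _ => d0)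
    (hG1meas : ∀ k, Measurable[ℱ (k + 1)] (G1 k))
    (hgmeas : ∀ k, Measurable[ℱ (k + 1)] (g k))
    (hDmeas : ∀ k, Measurable[ℱ k] (D k))
    (hrec : ∀ k, ∀ ω, ∀ i : Fin n,
      D (k + 1) ω i = D k ω i + α k * (G1 k ω i - g k ω i * D k ω i))
    (C₁ C₂ ε : ℝ) (hC₁ : 0 < C₁) (hC₂ : 0 < C₂) (hε : 0 < ε)
    (hG1int : ∀ k, Integrable (fun ω => ‖G1 k ω‖ ^ 2) P)
    (hgint : ∀ k, ∀ i : Fin n, Integrable (fun ω => g k ω i) P)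
    (hg2int : ∀ k, ∀ i : Fin n, Integrable (fun ω => (g k ω i) ^ 2) P)
    (hG1bound : ∀ k, ∀ᵐ ω ∂P, (P[(fun ω => ‖G1 k ω‖ ^ 2) | ℱ k]) ω ≤ C₁)
    (hgmean : ∀ k, ∀ i : Fin n, ∀ᵐ ω ∂P, ε ≤ (P[(fun ω => g k ω i) | ℱ k]) ω)
    (hg2bound : ∀ k, ∀ i : Fin n, ∀ᵐ ω ∂P, (P[(fun ω => (g k ω i) ^ 2) | ℱ k]) ω ≤ C₂) :
    ∀ᵐ ω ∂P, BddAbove (Set.range fun k => ‖D k ω‖) :=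
  fast_iterates_uniformly_bounded_as_general P ℱ α (fun k => (hα_pos k).le) hα_sq D G1 g
    (fun k => (hDmeas k).stronglyMeasurable) (hD0 ▸ memLp_const d0)
    (fun k => (memLp_two_iff_integrable_sq_norm
      ((hG1meas k).mono (ℱ.le _) le_rfl).aestronglyMeasurable).2 (hG1int k))
    (fun k => .of_eval_piLp fun i =>
      (memLp_two_iff_integrable_sq (hgint k i).aestronglyMeasurable).2 (hg2int k i))
    hrec C₁ C₂ ε hε hG1bound hgmean hg2bound
end

section
/- Let a, b, c be real numbers with 0 ≤ a < 1, b ≥ 0, c ≥ 0, and define T : ℝ → ℝ by T(x) = √((a x + b)² + c). Then T has a unique fixed point x̄ ∈ ℝ, given by x̄ = (a b + √(b² + (1 − a²) c)) / (1 − a²), and this fixed point satisfies x̄ ≤ b/(1 − a) + √(c/(1 − a²)). -/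
/-!
A fixed point `x` of `T x = √((a x + b)² + c)` satisfies `x ≥ 0` and `x² = (a x + b)² + c`.
Completing the square turns the equation into `((1 - a²) x - a b)² = b² + (1 - a²) c`, and
`|a x + b| ≤ x` forces `(1 - a²) x - a b = x - a (a x + b) ≥ 0`, which selects the positive square
root. The bound on the fixed point then comes from subadditivity of the square root.
-/

lemma sqrt_add_le_add_sqrt (x y : ℝ) : √(x + y) ≤ √x + √y := by
  have le_sq_sqrt (z : ℝ) : z ≤ √z ^ 2 := (Real.sqrt_le_iff.1 le_rfl).2
  refine Real.sqrt_le_iff.2 ⟨by positivity, ?_⟩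
  calc x + y ≤ √x ^ 2 + √y ^ 2 := add_le_add (le_sq_sqrt x) (le_sq_sqrt y)
    _ ≤ √x ^ 2 + √y ^ 2 + 2 * (√x * √y) := le_add_of_nonneg_right (by positivity)
    _ = (√x + √y) ^ 2 := by ring

lemma sqrt_mul_div_self {d : ℝ} (hd : 0 ≤ d) (x : ℝ) : √(d * x) / d = √(x / d) := by
  rw [Real.sqrt_mul hd, Real.sqrt_div' x hd, mul_div_right_comm, Real.sqrt_div_self,
    inv_mul_eq_div]

lemma mul_add_self_div_one_sub_sq {K : Type*} [Field K] {a b : K} (ha : 1 + a ≠ 0) :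
    (a * b + b) / (1 - a ^ 2) = b / (1 - a) := by
  rw [← mul_div_mul_left b (1 - a) ha]
  ring_nf

lemma sq_eq_mul_add_sq_add_iff {R : Type*} [CommRing R] [IsDomain R] {a b c x : R}
    (ha : 1 - a ^ 2 ≠ 0) :
    x ^ 2 = (a * x + b) ^ 2 + c ↔ ((1 - a ^ 2) * x - a * b) ^ 2 = b ^ 2 + (1 - a ^ 2) * c := by
  rw [← mul_right_inj' ha]
  constructor <;> intro h <;> linear_combination h

section OrderedRing

variable {R : Type*} [CommRing R] [LinearOrder R] [IsStrictOrderedRing R] {a b x : R}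

lemma one_sub_sq_pos_of_abs_lt_one (ha : |a| < 1) : 0 < 1 - a ^ 2 :=
  sub_pos.2 ((sq_lt_one_iff_abs_lt_one a).2 ha)

lemma one_sub_sq_mul_sub_nonneg (ha : |a| ≤ 1) (h : |a * x + b| ≤ x) :
    0 ≤ (1 - a ^ 2) * x - a * b := by
  have : a * (a * x + b) ≤ x :=
    calc a * (a * x + b) ≤ |a| * |a * x + b| := (le_abs_self _).trans_eq (abs_mul _ _)
      _ ≤ |a * x + b| := mul_le_of_le_one_left (abs_nonneg _) ha
      _ ≤ x := h
  linarith

end OrderedRing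

/-- The comparison map `T` of the convergence proofs, with the parameters `a`, `b`, `c` of one
step of the algorithm. -/
noncomputable def comparisonMap (a b c x : ℝ) : ℝ :=
  √((a * x + b) ^ 2 + c)

/-- The closed form `x̄` of the fixed point of `comparisonMap a b c`; meaningful for `|a| < 1`
and `0 ≤ c`. -/
noncomputable def comparisonFixedPoint (a b c : ℝ) : ℝ :=
  (a * b + √(b ^ 2 + (1 - a ^ 2) * c)) / (1 - a ^ 2)

section FixedPoint

variable {a b c x : ℝ}

lemma comparisonFixedPoint_nonneg (ha : |a| < 1) (hc : 0 ≤ c) :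
    0 ≤ comparisonFixedPoint a b c := by
  have hd := one_sub_sq_pos_of_abs_lt_one ha
  have : |a * b| ≤ √(b ^ 2 + (1 - a ^ 2) * c) :=
    calc |a * b| = |a| * |b| := abs_mul a b
      _ ≤ |b| := mul_le_of_le_one_left (abs_nonneg b) ha.le
      _ ≤ √(b ^ 2 + (1 - a ^ 2) * c) :=
        Real.abs_le_sqrt (le_add_of_nonneg_right (mul_nonneg hd.le hc))
  exact div_nonneg (neg_le_iff_add_nonneg'.1 ((neg_le_abs _).trans this)) hd.le

lemma eq_comparisonFixedPoint_iff (ha : 1 - a ^ 2 ≠ 0) :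
    x = comparisonFixedPoint a b c ↔
      (1 - a ^ 2) * x - a * b = √(b ^ 2 + (1 - a ^ 2) * c) := by
  rw [comparisonFixedPoint, eq_div_iff ha, mul_comm x, sub_eq_iff_eq_add']

lemma isFixedPt_comparisonMap_iff_sq (hc : 0 ≤ c) :
    Function.IsFixedPt (comparisonMap a b c) x ↔ 0 ≤ x ∧ x ^ 2 = (a * x + b) ^ 2 + c := by
  have hrad : 0 ≤ (a * x + b) ^ 2 + c := by positivity
  change √((a * x + b) ^ 2 + c) = x ↔ _
  constructor
  · intro h
    have hx : 0 ≤ x := h ▸ Real.sqrt_nonneg _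
    exact ⟨hx, ((Real.sqrt_eq_iff_eq_sq hrad hx).1 h).symm⟩
  · rintro ⟨hx, h⟩
    exact (Real.sqrt_eq_iff_eq_sq hrad hx).2 h.symm

theorem isFixedPt_comparisonMap_iff (ha : |a| < 1) (hc : 0 ≤ c) :
    Function.IsFixedPt (comparisonMap a b c) x ↔ x = comparisonFixedPoint a b c := by
  have hd := one_sub_sq_pos_of_abs_lt_one ha
  have hrad : 0 ≤ b ^ 2 + (1 - a ^ 2) * c := by positivity
  rw [isFixedPt_comparisonMap_iff_sq hc]
  constructor
  · rintro ⟨hx, hsq⟩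
    have habs : |a * x + b| ≤ x := abs_le_of_sq_le_sq (by linarith) hx
    rw [eq_comparisonFixedPoint_iff hd.ne', eq_comm,
      Real.sqrt_eq_iff_eq_sq hrad (one_sub_sq_mul_sub_nonneg ha.le habs)]
    exact ((sq_eq_mul_add_sq_add_iff hd.ne').1 hsq).symm
  · intro hx
    refine ⟨hx ▸ comparisonFixedPoint_nonneg ha hc, (sq_eq_mul_add_sq_add_iff hd.ne').2 ?_⟩
    rw [(eq_comparisonFixedPoint_iff hd.ne').1 hx, Real.sq_sqrt hrad]

theorem comparisonFixedPoint_le (ha : |a| < 1) :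
    comparisonFixedPoint a b c ≤ (a * b + |b|) / (1 - a ^ 2) + √(c / (1 - a ^ 2)) := by
  have hd := one_sub_sq_pos_of_abs_lt_one ha
  calc comparisonFixedPoint a b c
      ≤ (a * b + (√(b ^ 2) + √((1 - a ^ 2) * c))) / (1 - a ^ 2) := by
        unfold comparisonFixedPoint
        gcongr
        exact sqrt_add_le_add_sqrt _ _
    _ = (a * b + |b|) / (1 - a ^ 2) + √(c / (1 - a ^ 2)) := by
        rw [Real.sqrt_sq_eq_abs, ← add_assoc, add_div, sqrt_mul_div_self hd.le]

end FixedPoint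

theorem comparison_map_fixed_point_general (a b c : ℝ) (ha : |a| < 1) (hc : 0 ≤ c) :
    (∀ x, Function.IsFixedPt (comparisonMap a b c) x ↔ x = comparisonFixedPoint a b c) ∧
      comparisonFixedPoint a b c ≤ (a * b + |b|) / (1 - a ^ 2) + √(c / (1 - a ^ 2)) :=
  ⟨fun _ ↦ isFixedPt_comparisonMap_iff ha hc, comparisonFixedPoint_le ha⟩

/-- Fixed-point computation for the comparison map `T x = √((a x + b)² + c)`
with `0 ≤ a < 1`: the unique fixed point is
`x̄ = (a b + √(b² + (1 - a²) c)) / (1 - a²)`, and it satisfies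
`x̄ ≤ b / (1 - a) + √(c / (1 - a²))`. -/
theorem comparison_map_fixed_point (a b c : ℝ)
    (ha0 : 0 ≤ a) (ha1 : a < 1) (hb : 0 ≤ b) (hc : 0 ≤ c) :
    Real.sqrt ((a * ((a * b + Real.sqrt (b ^ 2 + (1 - a ^ 2) * c)) / (1 - a ^ 2)) + b) ^ 2 + c)
        = (a * b + Real.sqrt (b ^ 2 + (1 - a ^ 2) * c)) / (1 - a ^ 2) ∧
    (∀ x : ℝ, Real.sqrt ((a * x + b) ^ 2 + c) = x →
      x = (a * b + Real.sqrt (b ^ 2 + (1 - a ^ 2) * c)) / (1 - a ^ 2)) ∧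
    (a * b + Real.sqrt (b ^ 2 + (1 - a ^ 2) * c)) / (1 - a ^ 2)
        ≤ b / (1 - a) + Real.sqrt (c / (1 - a ^ 2)) := by
  obtain ⟨hfix, hle⟩ := comparison_map_fixed_point_general a b c (abs_lt.2 ⟨by linarith, ha1⟩) hc
  rw [abs_of_nonneg hb, mul_add_self_div_one_sub_sq (by positivity)] at hle
  exact ⟨(hfix _).2 rfl, fun x ↦ (hfix x).1, hle⟩
end

section
/- Let ε, A, B, C > 0 and c ≥ 0 with A ε ≤ 2, and let a, b be real exponents with 1/2 < a < b ≤ 1. Put α_k = A k^{-a} and β_k = B k^{-b} for k ≥ 1. Suppose (x_k)_{k≥1} is a sequence of nonnegative reals satisfying x_{k+1} ≤ √( ((1 − α_k ε/2) x_k + C β_k)² + c α_k² ) for all k ≥ 1. Then there exists a constant K > 0 such that x_k ≤ K (k^{-(b−a)} + k^{-a/2}) for all k ≥ 1. -/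
/-!
A power `p k = k ^ s` changes by `O(p k / k)` from one index to the next, which is negligible
against `η k * p k` for a contraction `η k` of order `k ^ (-a)` with `a < 1`. So, up to lower
order, the target `K * p k` is stationary while the recursion contracts towards it, and for `K`
large the drift and the noise each use up only a fixed share of the contraction: if
`x k ≤ K * p k` then `x (k + 1) ≤ (1 - η k / 4) * (K * p k) ≤ K * p (k + 1)`.

The only constraints on `p` are `δ = O(η p)` for the drift `δ` and `ν = O(η p ^ 2)` for the noise
`ν`. With `η` of order `α`, `δ` of order `β` and `ν` of order `α ^ 2` they read `β / α = O(p)` and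
`√α = O(p)`, so the sum of these two rates is the best choice.
-/

open Asymptotics Filter Set Topology

lemma sq_contraction_add_le {y z η δ ν : ℝ} (hη : η ∈ Icc 0 1) (hy : y ∈ Icc 0 z)
    (hδ : |δ| ≤ η / 2 * z) (hν : ν ≤ η / 4 * z ^ 2) :
    ((1 - η) * y + δ) ^ 2 + ν ≤ ((1 - η / 4) * z) ^ 2 := by
  obtain ⟨hη0, hη1⟩ := hη
  obtain ⟨hy0, hyz⟩ := hy
  have hy' : |(1 - η) * y| ≤ (1 - η) * z := by
    rw [abs_of_nonneg (mul_nonneg (by linarith) hy0)]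
    exact mul_le_mul_of_nonneg_left hyz (by linarith)
  have hdrift : |(1 - η) * y + δ| ≤ (1 - η / 2) * z := by
    linarith [abs_add_le ((1 - η) * y) δ]
  have hη_sq : η ^ 2 ≤ η := pow_le_of_le_one hη0 hη1 two_ne_zero
  calc ((1 - η) * y + δ) ^ 2 + ν
      ≤ ((1 - η / 2) * z) ^ 2 + η / 4 * z ^ 2 :=
        add_le_add (sq_le_sq.2 (hdrift.trans (le_abs_self _))) hν
    _ = (1 - 3 / 4 * η + η ^ 2 / 4) * z ^ 2 := by ring
    _ ≤ (1 - η / 4) ^ 2 * z ^ 2 :=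
        mul_le_mul_of_nonneg_right (by nlinarith) (sq_nonneg z)
    _ = ((1 - η / 4) * z) ^ 2 := by ring

lemma le_mul_of_sq_le_contraction {y y' p p' η δ ν K : ℝ} (hη : η ∈ Icc 0 1) (hK : 0 ≤ K)
    (hp : 0 ≤ p) (hpp' : (1 - η / 4) * p ≤ p') (hy : y ∈ Icc 0 (K * p))
    (hδ : |δ| ≤ K / 2 * (η * p)) (hν : ν ≤ K ^ 2 / 4 * (η * p ^ 2))
    (hrec : y' ^ 2 ≤ ((1 - η) * y + δ) ^ 2 + ν) :
    y' ≤ K * p' := by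
  have hsq : y' ^ 2 ≤ ((1 - η / 4) * (K * p)) ^ 2 :=
    hrec.trans (sq_contraction_add_le hη hy (by linarith) (by linarith))
  have hη' : 0 ≤ 1 - η / 4 := by linarith [hη.2]
  calc y' ≤ (1 - η / 4) * (K * p) := le_of_sq_le_sq hsq (by positivity)
    _ = K * ((1 - η / 4) * p) := by ring
    _ ≤ K * p' := mul_le_mul_of_nonneg_left hpp' hK

theorem isBigO_of_sq_le_contraction {x η δ ν p : ℕ → ℝ}
    (hx : ∀ᶠ k in atTop, 0 ≤ x k) (hη : ∀ᶠ k in atTop, η k ∈ Icc 0 1)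
    (hp : ∀ᶠ k in atTop, 0 < p k)
    (hvar : (fun k ↦ p (k + 1) - p k) =o[atTop] fun k ↦ η k * p k)
    (hδ : δ =O[atTop] fun k ↦ η k * p k) (hν : ν =O[atTop] fun k ↦ η k * p k ^ 2)
    (hrec : ∀ᶠ k in atTop, x (k + 1) ^ 2 ≤ ((1 - η k) * x k + δ k) ^ 2 + ν k) :
    x =O[atTop] p := by
  obtain ⟨L, hL⟩ := hδ.bound
  obtain ⟨M, hM⟩ := hν.bound
  obtain ⟨N, hN⟩ := eventually_atTop.1 (hx.and <| hη.and <| hp.and <|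
    (hvar.def (by norm_num : (0 : ℝ) < 1 / 4)).and <| hL.and <| hM.and hrec)
  obtain ⟨K, hK1, hKL, hKM, hKN⟩ : ∃ K, 1 ≤ K ∧ 2 * L ≤ K ∧ 4 * M ≤ K ∧ x N / p N ≤ K :=
    ((eventually_ge_atTop _).and <| (eventually_ge_atTop _).and <|
      (eventually_ge_atTop _).and <| eventually_ge_atTop _).exists
  have hbound : ∀ k ≥ N, x k ≤ K * p k := fun k hk ↦ by
    induction k, hk using Nat.le_induction with
    | base => exact (div_le_iff₀ (hN N le_rfl).2.2.1).1 hKN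
    | succ k hk ih =>
      obtain ⟨hxk, hηk, hpk, hvark, hδk, hνk, hreck⟩ := hN k hk
      have hηp : 0 ≤ η k * p k := mul_nonneg hηk.1 hpk.le
      have hηpp : 0 ≤ η k * p k ^ 2 := mul_nonneg hηk.1 (sq_nonneg _)
      rw [Real.norm_eq_abs, Real.norm_of_nonneg hηp] at hvark hδk
      rw [Real.norm_of_nonneg hηpp] at hνk
      have hdecay : (1 - η k / 4) * p k ≤ p (k + 1) := by linarith [(abs_le.1 hvark).1]
      have hLK : L ≤ K / 2 := by linarith
      have hMK : M ≤ K ^ 2 / 4 := by nlinarith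
      exact le_mul_of_sq_le_contraction hηk (by linarith) hpk.le hdecay ⟨hxk, ih⟩
        (hδk.trans (mul_le_mul_of_nonneg_right hLK hηp))
        ((Real.le_norm_self _).trans (hνk.trans (mul_le_mul_of_nonneg_right hMK hηpp))) hreck
  refine .of_bound K (eventually_atTop.2 ⟨N, fun k hk ↦ ?_⟩)
  rw [Real.norm_of_nonneg (hN k hk).1, Real.norm_of_nonneg (hN k hk).2.2.1.le]
  exact hbound k hk

lemma isLittleO_rpow_rpow_atTop {r s : ℝ} (h : r < s) :
    (fun t : ℝ ↦ t ^ r) =o[atTop] fun t ↦ t ^ s := by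
  have hlim : (fun t : ℝ ↦ t ^ (-(s - r))) =o[atTop] fun _ ↦ (1 : ℝ) :=
    (isLittleO_one_iff ℝ).2 (tendsto_rpow_neg_atTop (sub_pos.2 h))
  refine ((isBigO_refl (fun t : ℝ ↦ t ^ s) atTop).mul_isLittleO hlim).congr' ?_ (by simp)
  filter_upwards [eventually_gt_atTop 0] with t ht
  rw [← Real.rpow_add ht]
  ring_nf

lemma isBigO_rpow_add_one_sub_rpow (s : ℝ) :
    (fun t : ℝ ↦ (t + 1) ^ s - t ^ s) =O[atTop] fun t ↦ t ^ (s - 1) := by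
  have hdiff : DifferentiableAt ℝ (fun u : ℝ ↦ u ^ s) 1 :=
    Real.differentiableAt_rpow_const_of_ne s one_ne_zero
  have hlim : Tendsto (fun t : ℝ ↦ 1 + t⁻¹) atTop (𝓝 1) := by
    simpa using tendsto_inv_atTop_zero.const_add (1 : ℝ)
  -- `(t + 1) ^ s - t ^ s = t ^ s * ((1 + 1 / t) ^ s - 1 ^ s)`
  refine ((isBigO_refl (fun t : ℝ ↦ t ^ s) atTop).mul
    (hdiff.isBigO_sub.comp_tendsto hlim)).congr' ?_ ?_
  · filter_upwards [eventually_gt_atTop 0] with t ht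
    simp only [Function.comp_apply, Real.one_rpow, mul_sub, mul_one]
    rw [← Real.mul_rpow ht.le (by positivity), mul_add, mul_one, mul_inv_cancel₀ ht.ne']
  · filter_upwards [eventually_gt_atTop 0] with t ht
    simp only [Function.comp_apply, add_sub_cancel_left, Real.rpow_sub_one ht.ne', div_eq_mul_inv]

lemma isLittleO_natCast_rpow_add_one_sub_rpow {a : ℝ} (ha : a < 1) (s : ℝ) :
    (fun k : ℕ ↦ ((k + 1 : ℕ) : ℝ) ^ s - (k : ℝ) ^ s) =o[atTop]
      fun k : ℕ ↦ (k : ℝ) ^ (-a) * (k : ℝ) ^ s := by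
  have hreal : (fun t : ℝ ↦ (t + 1) ^ s - t ^ s) =o[atTop] fun t ↦ t ^ (-a + s) :=
    (isBigO_rpow_add_one_sub_rpow s).trans_isLittleO (isLittleO_rpow_rpow_atTop (by linarith))
  refine (hreal.comp_tendsto tendsto_natCast_atTop_atTop).congr' (.of_eq ?_) ?_
  · ext k
    simp
  · filter_upwards [eventually_gt_atTop 0] with k hk
    exact Real.rpow_add (Nat.cast_pos.2 hk) _ _

lemma eventually_mul_natCast_rpow_neg_mem_Icc {a d : ℝ} (ha : 0 < a) (hd : 0 ≤ d) :
    ∀ᶠ k : ℕ in atTop, d * (k : ℝ) ^ (-a) ∈ Icc (0 : ℝ) 1 := by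
  have hlim : Tendsto (fun k : ℕ ↦ d * (k : ℝ) ^ (-a)) atTop (𝓝 0) := by
    simpa using ((tendsto_rpow_neg_atTop ha).comp tendsto_natCast_atTop_atTop).const_mul d
  filter_upwards [hlim.eventually_le_const one_pos] with k hk using ⟨by positivity, hk⟩

theorem isBigO_rpow_of_sq_le_contraction {x : ℕ → ℝ} {a b e d D M : ℝ}
    (ha0 : 0 < a) (ha1 : a < 1) (hd : 0 < d) (hx : ∀ᶠ k in atTop, 0 ≤ x k)
    (hrec : ∀ᶠ k : ℕ in atTop, x (k + 1) ^ 2 ≤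
      ((1 - d * (k : ℝ) ^ (-a)) * x k + D * (k : ℝ) ^ (-b)) ^ 2 + M * (k : ℝ) ^ (-e)) :
    x =O[atTop] fun k : ℕ ↦ (k : ℝ) ^ (-(b - a)) + (k : ℝ) ^ (-(e - a) / 2) := by
  have hp : ∀ᶠ k : ℕ in atTop, 0 < (k : ℝ) ^ (-(b - a)) + (k : ℝ) ^ (-(e - a) / 2) := by
    filter_upwards [eventually_gt_atTop 0] with k hk
    positivity
  refine isBigO_of_sq_le_contraction hx
    (eventually_mul_natCast_rpow_neg_mem_Icc ha0 hd.le) hp ?_ ?_ ?_ hrec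
  all_goals
    simp only [mul_assoc d]
    refine .const_mul_right hd.ne' ?_
  · have hvar := isLittleO_natCast_rpow_add_one_sub_rpow ha1
    refine ((hvar (-(b - a))).add_add (hvar (-(e - a) / 2))).congr (fun k ↦ by ring) fun k ↦ ?_
    rw [Real.norm_of_nonneg (by positivity), Real.norm_of_nonneg (by positivity), mul_add]
  · refine .const_mul_left (.of_norm_eventuallyLE ?_) D
    filter_upwards [eventually_gt_atTop 0] with k hk
    have hk0 : (0 : ℝ) < k := Nat.cast_pos.2 hk
    calc ‖(k : ℝ) ^ (-b)‖ = (k : ℝ) ^ (-a) * (k : ℝ) ^ (-(b - a)) := by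
          rw [Real.norm_of_nonneg (by positivity), ← Real.rpow_add hk0]
          ring_nf
      _ ≤ (k : ℝ) ^ (-a) * ((k : ℝ) ^ (-(b - a)) + (k : ℝ) ^ (-(e - a) / 2)) := by
          gcongr
          exact le_add_of_nonneg_right (by positivity)
  · refine .const_mul_left (.of_norm_eventuallyLE ?_) M
    filter_upwards [eventually_gt_atTop 0] with k hk
    have hk0 : (0 : ℝ) < k := Nat.cast_pos.2 hk
    calc ‖(k : ℝ) ^ (-e)‖ = (k : ℝ) ^ (-a) * ((k : ℝ) ^ (-(e - a) / 2)) ^ 2 := by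
          rw [Real.norm_of_nonneg (by positivity), sq, ← Real.rpow_add hk0, ← Real.rpow_add hk0]
          ring_nf
      _ ≤ (k : ℝ) ^ (-a) * ((k : ℝ) ^ (-(b - a)) + (k : ℝ) ^ (-(e - a) / 2)) ^ 2 := by
          gcongr
          exact le_add_of_nonneg_left (by positivity)

theorem recursion_rate_bound_general {ε A B C c a b : ℝ} (hε : 0 < ε) (hA : 0 < A)
    (ha0 : 0 < a) (ha1 : a < 1) {x : ℕ → ℝ} (hx : ∀ k, 1 ≤ k → 0 ≤ x k)
    (hrec : ∀ k : ℕ, 1 ≤ k → x (k + 1) ^ 2 ≤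
      ((1 - (A * (k : ℝ) ^ (-a)) * ε / 2) * x k + C * (B * (k : ℝ) ^ (-b))) ^ 2
        + c * (A * (k : ℝ) ^ (-a)) ^ 2) :
    ∃ K : ℝ, 0 < K ∧ ∀ k : ℕ, 1 ≤ k →
      x k ≤ K * ((k : ℝ) ^ (-(b - a)) + (k : ℝ) ^ (-a / 2)) := by
  have hbigO : x =O[atTop] fun k : ℕ ↦ (k : ℝ) ^ (-(b - a)) + (k : ℝ) ^ (-(2 * a - a) / 2) := by
    refine isBigO_rpow_of_sq_le_contraction (d := A * ε / 2) (D := C * B) (M := c * A ^ 2)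
      ha0 ha1 (by positivity) (eventually_atTop.2 ⟨1, hx⟩) ?_
    filter_upwards [eventually_ge_atTop 1] with k hk
    have hsq : (k : ℝ) ^ (-(2 * a)) = ((k : ℝ) ^ (-a)) ^ 2 := by
      rw [← Real.rpow_mul_natCast k.cast_nonneg]
      ring_nf
    rw [hsq]
    exact (hrec k hk).trans_eq (by ring)
  rw [show 2 * a - a = a by ring] at hbigO
  obtain ⟨K, hK, hbound⟩ := bound_of_isBigO_nat_atTop hbigO
  refine ⟨K, hK, fun k hk ↦ ?_⟩
  have hpos : 0 < (k : ℝ) ^ (-(b - a)) + (k : ℝ) ^ (-a / 2) := by positivity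
  simpa only [Real.norm_of_nonneg (hx k hk), Real.norm_of_nonneg hpos.le] using hbound hpos.ne'

/-- Deterministic recursion-rate engine underlying Theorems 4 and 7: with fast
step sizes `α k = A k^{-a}` and slow step sizes `β k = B k^{-b}`,
`1/2 < a < b ≤ 1`, a nonnegative sequence satisfying
`x (k+1) ≤ √(((1 - α k ε/2) x k + C β k)² + c α k²)` decays at rate
`k^{-(b-a)} + k^{-a/2}`. -/
theorem recursion_rate_bound
    (ε A B C c : ℝ) (hε : 0 < ε) (hA : 0 < A) (hB : 0 < B) (hC : 0 < C) (hc : 0 ≤ c)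
    (hAε : A * ε ≤ 2)
    (a b : ℝ) (ha : 1/2 < a) (hab : a < b) (hb : b ≤ 1)
    (x : ℕ → ℝ) (hx : ∀ k, 1 ≤ k → 0 ≤ x k)
    (hrec : ∀ k : ℕ, 1 ≤ k →
      x (k + 1) ≤ Real.sqrt
        (((1 - (A * (k : ℝ) ^ (-a)) * ε / 2) * x k + C * (B * (k : ℝ) ^ (-b))) ^ 2
          + c * (A * (k : ℝ) ^ (-a)) ^ 2)) :
    ∃ K : ℝ, 0 < K ∧ ∀ k : ℕ, 1 ≤ k →
      x k ≤ K * ((k : ℝ) ^ (-(b - a)) + (k : ℝ) ^ (-a / 2)) :=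
  recursion_rate_bound_general hε hA (by linarith) (by linarith) hx fun k hk ↦
    (Real.le_sqrt (hx (k + 1) (by omega)) (by positivity)).1 (hrec k hk)
end

section
/- Let r and c be real numbers with 0 < r < c ≤ 1. Then there exists a constant C > 0 such that for all integers k ≥ 1, ∑_{i=1}^{k} (∏_{j=i+1}^{k} (1 − c/j)) i^{-(1+r)} ≤ C k^{-r}. -/
/-!
The sums `S k` obey `S (n + 1) = (1 - c / (n + 1)) * S n + (n + 1) ^ (-(1 + r))`. Because `r < c`,
the sequence `v n = n ^ (-r)` is eventually a strict supersolution of the homogeneous recursion: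
`v (n + 1) - (1 - c / (n + 1)) * v n ∼ (c - r) * (n + 1) ^ (-(1 + r))`. This gap absorbs the
perturbation once `v` is multiplied by a large constant, so `S = O(v)`.
-/

open Filter Asymptotics
open scoped Topology

theorem isBigO_of_norm_succ_le {E : Type*} [SeminormedAddCommGroup E] {u : ℕ → E}
    {a b v w : ℕ → ℝ} (ha : ∀ᶠ n in atTop, 0 ≤ a n)
    (hv : ∀ᶠ n in atTop, 0 < v n) (hw : ∀ᶠ n in atTop, 0 ≤ w n)
    (hvw : ∀ᶠ n in atTop, a n * v n + w n ≤ v (n + 1)) (hb : b =O[atTop] w)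
    (hu : ∀ᶠ n in atTop, ‖u (n + 1)‖ ≤ a n * ‖u n‖ + b n) : u =O[atTop] v := by
  obtain ⟨K, hK⟩ := hb.bound
  obtain ⟨N, hN⟩ := eventually_atTop.1 (ha.and (hv.and (hw.and (hvw.and (hK.and hu)))))
  set C := max K (‖u N‖ / v N)
  have hC : 0 ≤ C := le_max_of_le_right (div_nonneg (norm_nonneg _) (hN N le_rfl).2.1.le)
  have norm_le : ∀ n ≥ N, ‖u n‖ ≤ C * v n := by
    intro n hn
    induction n, hn using Nat.le_induction with
    | base => exact (div_le_iff₀ (hN N le_rfl).2.1).1 (le_max_right _ _)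
    | succ n hn ih =>
      obtain ⟨han, -, hwn, hvwn, hbn, hun⟩ := hN n hn
      have hbw : b n ≤ C * w n := calc
        b n ≤ K * ‖w n‖ := (le_abs_self _).trans hbn
        _ = K * w n := by rw [Real.norm_of_nonneg hwn]
        _ ≤ C * w n := by gcongr; exact le_max_left _ _
      calc ‖u (n + 1)‖ ≤ a n * ‖u n‖ + b n := hun
        _ ≤ a n * (C * v n) + C * w n := by gcongr
        _ = C * (a n * v n + w n) := by ring
        _ ≤ C * v (n + 1) := by gcongr
  refine .of_bound C (eventually_atTop.2 ⟨N, fun n hn ↦ (norm_le n hn).trans ?_⟩)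
  gcongr
  exact le_abs_self _

theorem eventually_one_sub_mul_mul_one_sub_rpow_lt {r c d : ℝ} (hd : d < c - r) :
    ∀ᶠ x : ℝ in 𝓝[>] 0, (1 - c * x) * (1 - x) ^ (-r) < 1 - d * x := by
  have hderiv : HasDerivAt (fun x : ℝ ↦ (1 - c * x) * (1 - x) ^ (-r)) (r - c) 0 := by
    have hlin : HasDerivAt (fun x : ℝ ↦ 1 - c * x) (-c) 0 := by
      simpa using ((hasDerivAt_id (0 : ℝ)).const_mul c).const_sub 1
    have hpow : HasDerivAt (fun x : ℝ ↦ (1 - x) ^ (-r)) r 0 := by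
      simpa using ((hasDerivAt_id (0 : ℝ)).const_sub 1).rpow_const (p := -r) (by simp)
    exact (hlin.mul hpow).congr_deriv (by simp; ring)
  have hslope := hderiv.hasDerivWithinAt.limsup_slope_le' (s := Set.Ioi 0) (r := -d) (by simp)
    (by linarith)
  filter_upwards [hslope, self_mem_nhdsWithin] with x hx (hx0 : 0 < x)
  simp only [slope_def_field, sub_zero, mul_zero, Real.one_rpow, mul_one, div_lt_iff₀ hx0] at hx
  linarith

theorem eventually_one_sub_div_mul_rpow_neg_add_le {r c d : ℝ} (hd : d < c - r) :
    ∀ᶠ n : ℕ in atTop, (1 - c / (n + 1)) * (n : ℝ) ^ (-r) + d * (n + 1 : ℝ) ^ (-(1 + r)) ≤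
      ((n + 1 : ℕ) : ℝ) ^ (-r) := by
  have hlim : Tendsto (fun n : ℕ ↦ ((n : ℝ) + 1)⁻¹) atTop (𝓝[>] 0) :=
    tendsto_inv_atTop_nhdsGT_zero.comp
      (tendsto_atTop_add_const_right _ 1 tendsto_natCast_atTop_atTop)
  filter_upwards [hlim.eventually (eventually_one_sub_mul_mul_one_sub_rpow_lt hd)] with n hn
  push_cast
  have hm : (0 : ℝ) < n + 1 := by positivity
  have hpow : (n : ℝ) ^ (-r) = (n + 1 : ℝ) ^ (-r) * (1 - (n + 1 : ℝ)⁻¹) ^ (-r) := by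
    have hfactor : 1 - (n + 1 : ℝ)⁻¹ = n / (n + 1) := by field_simp; ring
    rw [hfactor, ← Real.mul_rpow hm.le (by positivity), mul_div_cancel₀ _ hm.ne']
  have hpow_succ : (n + 1 : ℝ) ^ (-(1 + r)) = (n + 1 : ℝ) ^ (-r) * (n + 1 : ℝ)⁻¹ := by
    rw [neg_add_rev, Real.rpow_add hm, Real.rpow_neg_one]
  calc _ = (n + 1 : ℝ) ^ (-r) *
        ((1 - c * (n + 1 : ℝ)⁻¹) * (1 - (n + 1 : ℝ)⁻¹) ^ (-r) + d * (n + 1 : ℝ)⁻¹) := by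
        rw [hpow, hpow_succ]; ring
    _ ≤ (n + 1 : ℝ) ^ (-r) * 1 := by gcongr; linarith
    _ = (n + 1 : ℝ) ^ (-r) := mul_one _

theorem eventually_one_sub_div_nonneg (c : ℝ) : ∀ᶠ n : ℕ in atTop, 0 ≤ 1 - c / (n + 1) := by
  filter_upwards [tendsto_natCast_atTop_atTop.eventually_ge_atTop c] with n hn
  rw [sub_nonneg, div_le_one (by positivity)]
  linarith

/-- A version of Chung's lemma. -/
theorem isBigO_rpow_neg_of_norm_succ_le {E : Type*} [SeminormedAddCommGroup E] {u : ℕ → E}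
    {b : ℕ → ℝ} {r c : ℝ} (hrc : r < c)
    (hb : b =O[atTop] fun n : ℕ ↦ (n + 1 : ℝ) ^ (-(1 + r)))
    (hu : ∀ᶠ n : ℕ in atTop, ‖u (n + 1)‖ ≤ (1 - c / (n + 1)) * ‖u n‖ + b n) :
    u =O[atTop] fun n : ℕ ↦ (n : ℝ) ^ (-r) := by
  obtain ⟨d, hd0, hd⟩ := exists_between (sub_pos.2 hrc)
  refine isBigO_of_norm_succ_le (eventually_one_sub_div_nonneg c) ?_
    (.of_forall fun n ↦ by positivity) (eventually_one_sub_div_mul_rpow_neg_add_le hd)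
    (hb.const_mul_right hd0.ne') hu
  filter_upwards [eventually_gt_atTop 0] with n hn
  positivity

theorem sum_Icc_prod_Icc_mul_succ {R : Type*} [CommSemiring R] (f g : ℕ → R) {m n : ℕ}
    (hmn : m ≤ n + 1) :
    ∑ i ∈ Finset.Icc m (n + 1), (∏ j ∈ Finset.Icc (i + 1) (n + 1), f j) * g i =
      f (n + 1) * ∑ i ∈ Finset.Icc m n, (∏ j ∈ Finset.Icc (i + 1) n, f j) * g i + g (n + 1) := by
  rw [Finset.sum_Icc_succ_top hmn, Finset.mul_sum]
  congr 1
  · refine Finset.sum_congr rfl fun i hi ↦ ?_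
    have hin : i ≤ n := (Finset.mem_Icc.1 hi).2
    rw [Finset.prod_Icc_succ_top (by lia)]
    ring
  · simp

theorem isBigO_sum_Icc_prod_Icc_one_sub_div_mul {r c : ℝ} (hrc : r < c) {g : ℕ → ℝ}
    (hg : g =O[atTop] fun n : ℕ ↦ (n : ℝ) ^ (-(1 + r))) :
    (fun k : ℕ ↦ ∑ i ∈ Finset.Icc 1 k, (∏ j ∈ Finset.Icc (i + 1) k, (1 - c / (j : ℝ))) * g i)
      =O[atTop] fun k : ℕ ↦ (k : ℝ) ^ (-r) := by
  have hg_succ : (fun n ↦ ‖g (n + 1)‖) =O[atTop] fun n : ℕ ↦ (n + 1 : ℝ) ^ (-(1 + r)) := by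
    simpa only [Function.comp_def, Nat.cast_add_one] using
      (hg.comp_tendsto (tendsto_add_atTop_nat 1)).norm_left
  refine isBigO_rpow_neg_of_norm_succ_le hrc hg_succ ?_
  filter_upwards [eventually_one_sub_div_nonneg c] with n hn
  rw [sum_Icc_prod_Icc_mul_succ _ _ (Nat.le_add_left 1 n), Nat.cast_add_one]
  refine (norm_add_le _ _).trans_eq ?_
  rw [norm_mul, Real.norm_of_nonneg hn]

theorem discrete_convolution_estimate_general (r c : ℝ) (hrc : r < c) :
    ∃ C : ℝ, 0 < C ∧ ∀ k : ℕ, 1 ≤ k →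
      ∑ i ∈ Finset.Icc 1 k,
          (∏ j ∈ Finset.Icc (i + 1) k, (1 - c / (j : ℝ))) * (i : ℝ) ^ (-(1 + r)) ≤
        C * (k : ℝ) ^ (-r) := by
  obtain ⟨C, hC, hbound⟩ := bound_of_isBigO_nat_atTop
    (isBigO_sum_Icc_prod_Icc_one_sub_div_mul hrc (isBigO_refl _ _))
  refine ⟨C, hC, fun k hk ↦ ?_⟩
  have hpos : 0 < (k : ℝ) ^ (-r) := by positivity
  simpa only [Real.norm_of_nonneg hpos.le] using (Real.le_norm_self _).trans (hbound hpos.ne')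

/-- Discrete convolution estimate invoked in the proof of Theorem 5: with
contraction factors `∏_{j=i+1}^{k} (1 - c/j)` and perturbations `i^{-(1+r)}`,
the accumulated sum is of order `k^{-r}` provided `0 < r < c ≤ 1`. -/
theorem discrete_convolution_estimate (r c : ℝ) (hr : 0 < r) (hrc : r < c) (hc : c ≤ 1) :
    ∃ C : ℝ, 0 < C ∧ ∀ k : ℕ, 1 ≤ k →
      ∑ i ∈ Finset.Icc 1 k,
          (∏ j ∈ Finset.Icc (i + 1) k, (1 - c / (j : ℝ))) * (i : ℝ) ^ (-(1 + r)) ≤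
        C * (k : ℝ) ^ (-r) :=
  discrete_convolution_estimate_general r c hrc
end
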